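/- There is an absolute constant C > 0 such that the following holds. Fix a vector x ∈ S^{d−1}, let Q_t be an ORA walk of length t on ℝ^d, and let t ≥ C d (log d)(log log d). Then P[ ‖Q_t x‖_∞ ≥ 10 √((log d)/d) ] ≤ d^{−2}. -/

import Mathlib

noncomputable section

open MeasureTheory Real
open scoped ENNReal

namespace KacJL

instance matrixMeasurableSpace {m n : Type*} : MeasurableSpace (Matrix m n ℝ) :=
  inferInstanceAs (MeasurableSpace (m → n → ℝ))

/-- The rotation by angle `θ` in the `(i,j)` coordinate plane of `ℝ^d`. -/
def rotM (d : ℕ) (i j : Fin d) (θ : ℝ) : Matrix (Fin d) (Fin d) ℝ :=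
  Matrix.of fun k l =>
    if k = i ∧ l = i then Real.cos θ
    else if k = i ∧ l = j then -Real.sin θ
    else if k = j ∧ l = i then Real.sin θ
    else if k = j ∧ l = j then Real.cos θ
    else if k = l then 1 else 0

/-- The uniform distribution on pairs of distinct coordinates in `Fin d`. -/
def pairUniform (d : ℕ) : Measure (Fin d × Fin d) :=
  ((d * (d - 1) : ℕ) : ℝ≥0∞)⁻¹ •
    (Measure.count.restrict {p : Fin d × Fin d | p.1 ≠ p.2})

/-- The product `R_{i_T,j_T,π/4} ⋯ R_{i_1,j_1,π/4}` of ORA rotations determined by the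
pairs `ω`. -/
def oraMatrix {d T : ℕ} (ω : Fin T → Fin d × Fin d) : Matrix (Fin d) (Fin d) ℝ :=
  ((List.ofFn fun t => rotM d (ω t).1 (ω t).2 (Real.pi / 4)).reverse).prod

/-! ### Arithmetic weights -/

/-- odd double factorial as a real number -/
def dfac (n : ℕ) : ℝ := ∏ k ∈ Finset.range n, (2 * (k : ℝ) + 1)

lemma dfac_succ (n : ℕ) : dfac (n + 1) = dfac n * (2 * (n : ℝ) + 1) := by
  simp [dfac, Finset.prod_range_succ]

lemma dfac_zero : dfac 0 = 1 := by simp [dfac]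
lemma dfac_one : dfac 1 = 1 := by simp [dfac]

lemma dfac_pos (n : ℕ) : 0 < dfac n := by
  unfold dfac
  exact Finset.prod_pos fun k _ => by positivity

lemma one_le_dfac (n : ℕ) : 1 ≤ dfac n := by
  induction n with
  | zero => simp [dfac_zero]
  | succ n ih =>
    rw [dfac_succ]
    have : (0 : ℝ) ≤ n := Nat.cast_nonneg n
    nlinarith

lemma fact_two_mul (n : ℕ) : ((2 * n).factorial : ℝ) = 2 ^ n * n.factorial * dfac n := by
  induction n with
  | zero => simp [dfac_zero]
  | succ n ih =>
    rw [show 2 * (n + 1) = (2 * n + 1) + 1 by ring, Nat.factorial_succ, Nat.factorial_succ,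
      Nat.factorial_succ, dfac_succ]
    push_cast
    rw [ih]
    ring

lemma choose_dfac (a b : ℕ) :
    ((2 * (a + b)).choose (2 * a) : ℝ) * (dfac a * dfac b) = (a + b).choose a * dfac (a + b) := by
  have h1 : ((2 * (a + b)).choose (2 * a) : ℝ) * (2 * a).factorial * (2 * b).factorial
      = (2 * (a + b)).factorial := by
    have := Nat.add_choose_mul_factorial_mul_factorial (2 * a) (2 * b)
    rw [← Nat.choose_symm_add, ← mul_add] at this
    exact_mod_cast this
  have h2 : ((a + b).choose a : ℝ) * a.factorial * b.factorial = (a + b).factorial := by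
    have := Nat.add_choose_mul_factorial_mul_factorial a b
    rw [← Nat.choose_symm_add] at this
    exact_mod_cast this
  rw [fact_two_mul, fact_two_mul, fact_two_mul] at h1
  have ha : (0 : ℝ) < a.factorial := by exact_mod_cast Nat.factorial_pos a
  have hb : (0 : ℝ) < b.factorial := by exact_mod_cast Nat.factorial_pos b
  rw [← h2, pow_add] at h1
  have hne : (2 : ℝ) ^ a * 2 ^ b * a.factorial * b.factorial ≠ 0 := by positivity
  apply mul_left_cancel₀ hne
  linear_combination h1

lemma dfac_diag (b : ℕ) : dfac (2 * (b + 1)) ≤ 3 / 4 * 2 ^ (2 * (b + 1)) *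
    (dfac (b + 1) * dfac (b + 1)) := by
  induction b with
  | zero => norm_num [dfac, Finset.prod_range_succ]
  | succ b ih =>
    rw [show 2 * (b + 1 + 1) = 2 * (b + 1) + 1 + 1 by ring, dfac_succ, dfac_succ, dfac_succ (b + 1)]
    have h0 := dfac_pos (2 * (b + 1))
    have h1 := dfac_pos (b + 1)
    push_cast
    have key : (2 * (2 * ((b : ℝ) + 1)) + 1) * (2 * (2 * ((b : ℝ) + 1) + 1) + 1)
        ≤ 4 * (2 * ((b : ℝ) + 1) + 1) ^ 2 := by nlinarith
    calc dfac (2 * (b + 1)) * (2 * (2 * ((b : ℝ) + 1)) + 1) * (2 * (2 * ((b : ℝ) + 1) + 1) + 1)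
        = dfac (2 * (b + 1)) *
          ((2 * (2 * ((b : ℝ) + 1)) + 1) * (2 * (2 * ((b : ℝ) + 1) + 1) + 1)) := by ring
      _ ≤ (3 / 4 * 2 ^ (2 * (b + 1)) * (dfac (b + 1) * dfac (b + 1))) *
          (4 * (2 * ((b : ℝ) + 1) + 1) ^ 2) := by gcongr
      _ = _ := by rw [pow_succ, pow_succ]; ring

lemma dfac_add_le_aux (b k : ℕ) : dfac ((b + 1 + k) + (b + 1)) ≤
    3 / 4 * 2 ^ ((b + 1 + k) + (b + 1)) * (dfac (b + 1 + k) * dfac (b + 1)) := by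
  induction k with
  | zero => have := dfac_diag b; rw [two_mul] at this; simpa using this
  | succ k ih =>
    rw [show (b + 1 + (k + 1)) + (b + 1) = (b + 1 + k) + (b + 1) + 1 by ring,
      show b + 1 + (k + 1) = b + 1 + k + 1 by ring, dfac_succ, dfac_succ (b + 1 + k)]
    have h0 := dfac_pos ((b + 1 + k) + (b + 1))
    have h1 := dfac_pos (b + 1)
    have h2 := dfac_pos (b + 1 + k)
    push_cast
    have key : (2 * ((b : ℝ) + 1 + k + (b + 1)) + 1) ≤ 2 * (2 * ((b : ℝ) + 1 + k) + 1) := by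
      have : (0 : ℝ) ≤ k := Nat.cast_nonneg k
      nlinarith
    calc _ ≤ (3 / 4 * 2 ^ ((b + 1 + k) + (b + 1)) * (dfac (b + 1 + k) * dfac (b + 1))) *
          (2 * (2 * ((b : ℝ) + 1 + k) + 1)) := by gcongr
      _ = _ := by rw [pow_succ]; ring

lemma dfac_add_le (a b : ℕ) (ha : 1 ≤ a) (hb : 1 ≤ b) :
    dfac (a + b) ≤ 3 / 4 * 2 ^ (a + b) * (dfac a * dfac b) := by
  rcases le_total b a with h | h
  · obtain ⟨c, rfl⟩ := Nat.exists_eq_add_of_le' hb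
    obtain ⟨k, rfl⟩ := Nat.exists_eq_add_of_le h
    exact dfac_add_le_aux c k
  · obtain ⟨c, rfl⟩ := Nat.exists_eq_add_of_le' ha
    obtain ⟨k, rfl⟩ := Nat.exists_eq_add_of_le h
    have := dfac_add_le_aux c k
    rw [add_comm (c + 1), mul_comm (dfac (c + 1))]
    exact this

lemma dfac_le_pow (n : ℕ) : dfac n ≤ (n : ℝ) ^ n := by
  induction n with
  | zero => simp [dfac_zero]
  | succ n ih =>
    rw [dfac_succ]
    rcases Nat.eq_zero_or_pos n with rfl | hn
    · simp [dfac_zero]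
    have hn' : (0 : ℝ) < n := by exact_mod_cast hn
    have hB : 2 * (n : ℝ) ^ n ≤ ((n : ℝ) + 1) ^ n := by
      have := one_add_mul_le_pow (a := 1 / (n : ℝ)) (by linarith [show 0 < 1 / (n : ℝ) by positivity]) n
      have h2 : (n : ℝ) + 1 = n * (1 + 1 / n) := by field_simp
      rw [h2, mul_pow]
      have h3 : 1 + (n : ℝ) * (1 / n) = 2 := by field_simp; norm_num
      rw [h3] at this
      have := mul_le_mul_of_nonneg_left this (show (0 : ℝ) ≤ (n : ℝ) ^ n by positivity)
      linarith
    push_cast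
    rw [pow_succ]
    have : (0 : ℝ) < (n : ℝ) ^ n := by positivity
    calc dfac n * (2 * n + 1) ≤ (n : ℝ) ^ n * (2 * n + 1) := by gcongr
      _ ≤ (2 * (n : ℝ) ^ n) * (n + 1) := by nlinarith
      _ ≤ _ := by gcongr

/-- the supersolution weight -/
def gw (κ : ℝ) (n : ℕ) : ℝ := if n = 0 then 1 else dfac n * κ ^ n * 2 ^ (n - 1)

lemma gw_pos {κ : ℝ} (hκ : 0 < κ) (n : ℕ) : 0 < gw κ n := by
  unfold gw
  have := dfac_pos n
  split_ifs <;> positivity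

lemma pow_le_gw {κ : ℝ} (hκ : 0 < κ) (n : ℕ) : κ ^ n ≤ gw κ n := by
  unfold gw
  split_ifs with h
  · simp [h]
  · have h1 := one_le_dfac n
    have h2 : (1 : ℝ) ≤ 2 ^ (n - 1) := one_le_pow₀ (by norm_num)
    have h3 : 0 < κ ^ n := by positivity
    calc κ ^ n = 1 * κ ^ n * 1 := by ring
      _ ≤ _ := by gcongr

/-- binomial type splitting weights -/
def wt (n c : ℕ) : ℝ := ((2 * n).choose (2 * c) : ℝ) / 2 ^ n

lemma wt_nonneg (n c : ℕ) : 0 ≤ wt n c := by unfold wt; positivity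

/-- total of the splitting weights against `gw` -/
def hw (κ : ℝ) (n : ℕ) : ℝ := ∑ c ∈ Finset.range (n + 1), wt n c * (gw κ c * gw κ (n - c))

lemma hw_zero (κ : ℝ) : hw κ 0 = 1 := by simp [hw, wt, gw]

lemma hw_term (κ : ℝ) (n c : ℕ) (hn : 1 ≤ n) (hc : c ≤ n) :
    wt n c * (gw κ c * gw κ (n - c)) =
      gw κ n / 2 ^ n * (((n.choose c : ℝ) + if c = 0 then 1 else 0) + if c = n then 1 else 0) / 2 := by
  obtain ⟨b, rfl⟩ := Nat.exists_eq_add_of_le hc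
  have hch := choose_dfac c b
  rcases Nat.eq_zero_or_pos c with rfl | hc0
  · have hb : b ≠ 0 := by omega
    have hb' : ¬ (0 = b) := fun h => hb h.symm
    simp [wt, gw, hb, hb']
    ring
  · have hc1 : c ≠ 0 := by omega
    rcases Nat.eq_zero_or_pos b with rfl | hb0
    · simp [wt, gw, hc1]
      ring
    · have hb1 : b ≠ 0 := by omega
      have h3 : c + b ≠ 0 := by omega
      have h4 : ¬ (c = c + b) := by omega
      simp only [wt, gw, hc1, hb1, h3, h4, Nat.add_sub_cancel_left, if_false, add_zero]
      have hp : (2 : ℝ) ^ (c + b - 1) = 2 ^ (c - 1) * 2 ^ (b - 1) * 2 := by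
        rw [← pow_add, ← pow_succ]; congr 1; omega
      rw [hp, pow_add κ]
      linear_combination (κ ^ c * κ ^ b * 2 ^ (c - 1) * 2 ^ (b - 1) / 2 ^ (c + b)) * hch

lemma hw_eq (κ : ℝ) (n : ℕ) (hn : 1 ≤ n) : hw κ n = gw κ n * (1 / 2 + 1 / 2 ^ n) := by
  unfold hw
  rw [Finset.sum_congr rfl fun c hc => hw_term κ n c hn (by simpa [Nat.lt_succ_iff] using hc)]
  rw [← Finset.sum_div, ← Finset.mul_sum, Finset.sum_add_distrib, Finset.sum_add_distrib]
  have h1 : ∑ c ∈ Finset.range (n + 1), (n.choose c : ℝ) = 2 ^ n := by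
    exact_mod_cast Nat.sum_range_choose n
  rw [h1]
  simp
  field_simp
  ring

/-- relative excess -/
def ew (a b : ℕ) : ℝ :=
  (if a = 0 ∧ 2 ≤ b then -(1 / 4) else 0) + (if b = 0 ∧ 2 ≤ a then -(1 / 4) else 0) +
    (if a ≠ 0 ∧ b ≠ 0 then 9 / 8 * 2 ^ (a + b) else 0)

lemma inv_pow_le (n : ℕ) (h : 2 ≤ n) : (1 : ℝ) / 2 ^ n ≤ 1 / 4 := by
  have : (2 : ℝ) ^ 2 ≤ 2 ^ n := pow_le_pow_right₀ (by norm_num) h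
  rw [div_le_div_iff₀ (by positivity) (by norm_num)]
  linarith

lemma hw_single {κ : ℝ} (hκ : 0 < κ) (b : ℕ) :
    hw κ b ≤ (1 + if 2 ≤ b then -(1 / 4) else 0) * gw κ b := by
  have hg := gw_pos hκ b
  rcases Nat.eq_zero_or_pos b with rfl | h
  · simp [hw_zero, gw]
  · rw [hw_eq κ b h]
    split_ifs with h2
    · have := inv_pow_le b h2
      nlinarith
    · obtain rfl : b = 1 := by omega
      norm_num

lemma hw_le {κ : ℝ} (hκ : 0 < κ) (a b : ℕ) :
    hw κ (a + b) ≤ (1 + ew a b) * (gw κ a * gw κ b) := by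
  rcases Nat.eq_zero_or_pos a with rfl | ha
  · have := hw_single hκ b
    by_cases h : 2 ≤ b <;> simpa [ew, gw, h] using this
  · rcases Nat.eq_zero_or_pos b with rfl | hb
    · have := hw_single hκ a
      have ha' : a ≠ 0 := by omega
      by_cases h : 2 ≤ a <;> simpa [ew, ha', h, show gw κ 0 = 1 by simp [gw]] using this
    · have ha' : a ≠ 0 := by omega
      have hb' : b ≠ 0 := by omega
      rw [hw_eq κ (a + b) (by omega)]
      have hga := gw_pos hκ a
      have hgb := gw_pos hκ b
      have h1 : gw κ (a + b) ≤ 2 * (3 / 4 * 2 ^ (a + b)) * (gw κ a * gw κ b) := by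
        have h3 : a + b ≠ 0 := by omega
        simp only [gw, ha', hb', h3, if_false]
        have hp : (2 : ℝ) ^ (a + b - 1) = 2 ^ (a - 1) * 2 ^ (b - 1) * 2 := by
          rw [← pow_add, ← pow_succ]; congr 1; omega
        rw [hp, pow_add κ]
        have := mul_le_mul_of_nonneg_right (dfac_add_le a b ha hb)
          (show 0 ≤ κ ^ a * κ ^ b * (2 ^ (a - 1) * 2 ^ (b - 1) * 2) by positivity)
        linarith
      have h2 : (1 : ℝ) / 2 + 1 / 2 ^ (a + b) ≤ 3 / 4 := by
        have := inv_pow_le (a + b) (by omega)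
        linarith
      have hgg : 0 < gw κ a * gw κ b := by positivity
      have hew : ew a b = 9 / 8 * 2 ^ (a + b) := by simp [ew, ha', hb']
      rw [hew]
      calc _ ≤ (2 * (3 / 4 * 2 ^ (a + b)) * (gw κ a * gw κ b)) * (3 / 4) := by
            gcongr
        _ ≤ _ := by nlinarith [pow_pos (two_pos : (0:ℝ) < 2) (a+b)]

/-! ### Multi-index supersolution -/

/-- the product weight of a multi-index -/
def Gw (κ : ℝ) {d : ℕ} (α : Fin d → ℕ) : ℝ := ∏ k, gw κ (α k)

/-- move mass between `i` and `j` -/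
def upd {d : ℕ} (α : Fin d → ℕ) (i j : Fin d) (c : ℕ) : Fin d → ℕ :=
  Function.update (Function.update α i c) j (α i + α j - c)

lemma prod_split {d : ℕ} (F : Fin d → ℝ) {i j : Fin d} (h : i ≠ j) :
    ∏ k, F k = F i * F j * ∏ k ∈ (Finset.univ.erase i).erase j, F k := by
  rw [← Finset.mul_prod_erase Finset.univ F (Finset.mem_univ i),
    ← Finset.mul_prod_erase (Finset.univ.erase i) F (a := j) (by simp [h.symm]), mul_assoc]

lemma sum_split {d : ℕ} (F : Fin d → ℕ) {i j : Fin d} (h : i ≠ j) :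
    ∑ k, F k = F i + F j + ∑ k ∈ (Finset.univ.erase i).erase j, F k := by
  rw [← Finset.add_sum_erase Finset.univ F (Finset.mem_univ i),
    ← Finset.add_sum_erase (Finset.univ.erase i) F (a := j) (by simp [h.symm]), add_assoc]

lemma upd_i {d : ℕ} (α : Fin d → ℕ) {i j : Fin d} (h : i ≠ j) (c : ℕ) : upd α i j c i = c := by
  simp [upd, Function.update_of_ne h]

lemma upd_j {d : ℕ} (α : Fin d → ℕ) (i j : Fin d) (c : ℕ) :
    upd α i j c j = α i + α j - c := by
  simp [upd]

lemma upd_rest {d : ℕ} (α : Fin d → ℕ) {i j k : Fin d} (c : ℕ)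
    (hk : k ∈ (Finset.univ.erase i).erase j) : upd α i j c k = α k := by
  simp at hk
  simp [upd, hk.1, hk.2]

lemma upd_sum {d : ℕ} (α : Fin d → ℕ) {i j : Fin d} (h : i ≠ j) (c : ℕ) (hc : c ≤ α i + α j) :
    ∑ k, upd α i j c k = ∑ k, α k := by
  rw [sum_split _ h, sum_split α h, upd_i α h, upd_j,
    Finset.sum_congr rfl fun k hk => upd_rest α c hk]
  omega

lemma Gw_pos {κ : ℝ} (hκ : 0 < κ) {d : ℕ} (α : Fin d → ℕ) : 0 < Gw κ α :=
  Finset.prod_pos fun k _ => gw_pos hκ (α k)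

lemma pow_le_Gw {κ : ℝ} (hκ : 0 < κ) {d : ℕ} (α : Fin d → ℕ) : κ ^ (∑ k, α k) ≤ Gw κ α := by
  unfold Gw
  rw [← Finset.prod_pow_eq_pow_sum]
  exact Finset.prod_le_prod (fun k _ => by positivity) fun k _ => pow_le_gw hκ (α k)

lemma Gw_pair {κ : ℝ} (hκ : 0 < κ) {d : ℕ} (α : Fin d → ℕ) {i j : Fin d} (h : i ≠ j) :
    ∑ c ∈ Finset.range (α i + α j + 1), wt (α i + α j) c * Gw κ (upd α i j c) ≤
      (1 + ew (α i) (α j)) * Gw κ α := by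
  have hrest : 0 < ∏ k ∈ (Finset.univ.erase i).erase j, gw κ (α k) :=
    Finset.prod_pos fun k _ => gw_pos hκ (α k)
  have : ∀ c, Gw κ (upd α i j c) = gw κ c * gw κ (α i + α j - c) *
      ∏ k ∈ (Finset.univ.erase i).erase j, gw κ (α k) := by
    intro c
    unfold Gw
    rw [prod_split _ h, upd_i α h, upd_j,
      Finset.prod_congr rfl fun k hk => by rw [upd_rest α c hk]]
  simp_rw [this, ← mul_assoc]
  rw [← Finset.sum_mul]
  unfold Gw
  rw [prod_split _ h]
  have h1 := hw_le hκ (α i) (α j)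
  unfold hw at h1
  have := mul_le_mul_of_nonneg_right h1 hrest.le
  simp_rw [← mul_assoc] at this ⊢
  exact this

lemma four_mul_le (r : ℕ) : 4 * (r * (r - 1)) ≤ 3 * 2 ^ r := by
  rcases le_or_gt r 3 with h | h
  · interval_cases r <;> norm_num
  · obtain ⟨k, rfl⟩ := Nat.exists_eq_add_of_le h
    induction k with
    | zero => norm_num
    | succ k ih =>
      have := ih (by omega)
      simp only [Nat.succ_eq_add_one] at *
      have e1 : 3 + 1 + (k + 1) - 1 = k + 4 := by omega
      have e2 : 3 + 1 + k - 1 = k + 3 := by omega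
      rw [e1]; rw [e2] at this
      rw [show 3 + 1 + (k + 1) = (3 + 1 + k) + 1 by ring, pow_succ]
      nlinarith

lemma sum_pos_part {d : ℕ} (α : Fin d → ℕ) :
    ∑ p ∈ (Finset.univ : Finset (Fin d)).offDiag,
      (if α p.1 ≠ 0 ∧ α p.2 ≠ 0 then (2 : ℝ) ^ (α p.1 + α p.2) else 0) ≤
      3 * 2 ^ (∑ k, α k) := by
  classical
  set S := Finset.univ.filter fun k => α k ≠ 0 with hS
  set r := S.card with hr
  rw [← Finset.sum_filter]
  have hset : ((Finset.univ : Finset (Fin d)).offDiag.filter fun p => α p.1 ≠ 0 ∧ α p.2 ≠ 0)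
      = S.offDiag := by
    ext p
    simp [hS, Finset.mem_offDiag]
    tauto
  rw [hset]
  have hterm : ∀ p ∈ S.offDiag, (2 : ℝ) ^ (α p.1 + α p.2) ≤ 4 * 2 ^ (∑ k, α k) / 2 ^ r := by
    intro p hp
    rw [Finset.mem_offDiag] at hp
    rw [le_div_iff₀ (by positivity), ← pow_add, show (4 : ℝ) = 2 ^ 2 by norm_num, ← pow_add]
    apply pow_le_pow_right₀ (by norm_num)
    rw [sum_split α hp.2.2]
    have : r ≤ 2 + ∑ k ∈ (Finset.univ.erase p.1).erase p.2, α k := by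
      have h1 : r = ((S.erase p.1).erase p.2).card + 2 := by
        have a1 := Finset.card_erase_add_one hp.1
        have a2 := Finset.card_erase_add_one (s := S.erase p.1) (a := p.2)
          (Finset.mem_erase.2 ⟨hp.2.2.symm, hp.2.1⟩)
        omega
      have h2 : ((S.erase p.1).erase p.2).card ≤ ∑ k ∈ (S.erase p.1).erase p.2, α k := by
        rw [Finset.card_eq_sum_ones]
        apply Finset.sum_le_sum
        intro k hk
        simp [hS] at hk
        omega
      have h3 : ∑ k ∈ (S.erase p.1).erase p.2, α k ≤
          ∑ k ∈ (Finset.univ.erase p.1).erase p.2, α k :=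
        Finset.sum_le_sum_of_subset (Finset.erase_subset_erase _
          (Finset.erase_subset_erase _ (Finset.subset_univ _)))
      omega
    omega
  refine (Finset.sum_le_card_nsmul _ _ _ hterm).trans ?_
  rw [Finset.offDiag_card, nsmul_eq_mul, mul_div_assoc', div_le_iff₀ (by positivity)]
  have h4 := four_mul_le r
  have h5 : r * r - r = r * (r - 1) := by rw [Nat.mul_sub, mul_one]
  rw [← hr, h5]
  have h6 : (4 : ℝ) * ((r * (r - 1) : ℕ) : ℝ) ≤ 3 * 2 ^ r := by exact_mod_cast h4
  have := mul_le_mul_of_nonneg_right h6 (show (0 : ℝ) ≤ 2 ^ (∑ k, α k) by positivity)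
  linarith

lemma card_zero_ge {d : ℕ} (α : Fin d → ℕ) :
    (d : ℝ) - (∑ k, α k : ℕ) ≤ ((Finset.univ.filter fun k => α k = 0).card : ℝ) := by
  have h1 := Finset.card_filter_add_card_filter_not (s := (Finset.univ : Finset (Fin d)))
    (fun k => α k = 0)
  have h2 : (Finset.univ.filter fun k => ¬ α k = 0).card ≤ ∑ k, α k := by
    rw [Finset.card_eq_sum_ones]
    refine (Finset.sum_le_sum (g := α) ?_).trans (Finset.sum_le_sum_of_subset (Finset.filter_subset _ _))
    intro k hk
    simp at hk
    omega
  have h3 : d ≤ (Finset.univ.filter fun k => α k = 0).card + ∑ k, α k := by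
    simp at h1
    omega
  have : (d : ℝ) ≤ ((Finset.univ.filter fun k => α k = 0).card + ∑ k, α k : ℕ) := by
    exact_mod_cast h3
  push_cast at this ⊢
  linarith

lemma sum_neg_part {d : ℕ} (α : Fin d → ℕ) (i₀ : Fin d) (h : 2 ≤ α i₀) :
    ∑ p ∈ (Finset.univ : Finset (Fin d)).offDiag,
      (if α p.2 = 0 ∧ 2 ≤ α p.1 then -(1 / 4 : ℝ) else 0) ≤
      -(1 / 4) * ((d : ℝ) - (∑ k, α k : ℕ)) := by
  classical
  rw [← Finset.sum_filter, Finset.sum_const, nsmul_eq_mul]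
  have hc := card_zero_ge α
  have : (Finset.univ.filter fun k => α k = 0).card ≤
      ((Finset.univ : Finset (Fin d)).offDiag.filter fun p => α p.2 = 0 ∧ 2 ≤ α p.1).card := by
    apply Finset.card_le_card_of_injOn (fun k => (i₀, k))
    · intro k hk
      simp at hk
      simp [hk, h]
      rintro rfl
      omega
    · intro a _ b _ hab
      simpa using hab
  have h' : ((Finset.univ.filter fun k => α k = 0).card : ℝ) ≤
      (((Finset.univ : Finset (Fin d)).offDiag.filter fun p => α p.2 = 0 ∧ 2 ≤ α p.1).card : ℝ) := by
    exact_mod_cast this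
  linarith

lemma sum_offDiag_swap {d : ℕ} (f : Fin d × Fin d → ℝ) :
    ∑ p ∈ (Finset.univ : Finset (Fin d)).offDiag, f p.swap =
      ∑ p ∈ (Finset.univ : Finset (Fin d)).offDiag, f p := by
  apply Finset.sum_equiv (Equiv.prodComm _ _)
  · intro p
    simp [Finset.mem_offDiag, eq_comm]
  · intro p _
    rfl

lemma card_offDiag_real (d : ℕ) :
    (((Finset.univ : Finset (Fin d)).offDiag.card : ℕ) : ℝ) = d * ((d : ℝ) - 1) := by
  rw [Finset.offDiag_card]
  simp only [Finset.card_univ, Fintype.card_fin]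
  rw [Nat.cast_sub (Nat.le_mul_self d)]
  push_cast
  ring

lemma sum_ew {d : ℕ} (α : Fin d → ℕ) (i₀ : Fin d) (h : 2 ≤ α i₀) :
    ∑ p ∈ (Finset.univ : Finset (Fin d)).offDiag, ew (α p.1) (α p.2) ≤
      -(1 / 2) * ((d : ℝ) - (∑ k, α k : ℕ)) + 27 / 8 * 2 ^ (∑ k, α k) := by
  have h1 := sum_neg_part α i₀ h
  have h2 := h1
  rw [← sum_offDiag_swap] at h2
  have h3 := sum_pos_part α
  unfold ew
  rw [Finset.sum_add_distrib, Finset.sum_add_distrib]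
  have h4 : ∑ p ∈ (Finset.univ : Finset (Fin d)).offDiag,
      (if α p.1 ≠ 0 ∧ α p.2 ≠ 0 then 9 / 8 * (2 : ℝ) ^ (α p.1 + α p.2) else 0) =
      9 / 8 * ∑ p ∈ (Finset.univ : Finset (Fin d)).offDiag,
      (if α p.1 ≠ 0 ∧ α p.2 ≠ 0 then (2 : ℝ) ^ (α p.1 + α p.2) else 0) := by
    rw [Finset.mul_sum]
    exact Finset.sum_congr rfl fun p _ => by split_ifs <;> simp
  rw [h4]
  simp only [Prod.fst_swap, Prod.snd_swap] at h2
  linarith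

/-- the contraction of the supersolution -/
lemma Gw_contract {κ : ℝ} (hκ : 0 < κ) {d : ℕ} (α : Fin d → ℕ) (i₀ : Fin d) (h : 2 ≤ α i₀)
    (hc : 27 / 16 * 2 ^ (∑ k, α k) + (d : ℝ) / 25 ≤ ((d : ℝ) - (∑ k, α k : ℕ)) / 4) :
    ∑ p ∈ (Finset.univ : Finset (Fin d)).offDiag,
      ∑ c ∈ Finset.range (α p.1 + α p.2 + 1), wt (α p.1 + α p.2) c * Gw κ (upd α p.1 p.2 c) ≤
      (d * ((d : ℝ) - 1) - 2 * d / 25) * Gw κ α := by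
  have hG := Gw_pos hκ α
  calc _ ≤ ∑ p ∈ (Finset.univ : Finset (Fin d)).offDiag, (1 + ew (α p.1) (α p.2)) * Gw κ α :=
        Finset.sum_le_sum fun p hp => Gw_pair hκ α (Finset.mem_offDiag.1 hp).2.2
    _ = (d * ((d : ℝ) - 1) + ∑ p ∈ (Finset.univ : Finset (Fin d)).offDiag, ew (α p.1) (α p.2)) *
        Gw κ α := by
        rw [← Finset.sum_mul, Finset.sum_add_distrib, Finset.sum_const, nsmul_eq_mul, mul_one,
          card_offDiag_real]
    _ ≤ _ := by
        apply mul_le_mul_of_nonneg_right _ hG.le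
        have := sum_ew α i₀ h
        linarith

/-! ### The Markov operator -/

/-- one ORA step applied to a vector -/
def vstep {d : ℕ} (p : Fin d × Fin d) (x : Fin d → ℝ) : Fin d → ℝ :=
  (rotM d p.1 p.2 (Real.pi / 4)).mulVec x

lemma vstep_apply {d : ℕ} {i j : Fin d} (h : i ≠ j) (x : Fin d → ℝ) (k : Fin d) :
    vstep (i, j) x k = if k = i then (x i - x j) / √2 else if k = j then (x i + x j) / √2
      else x k := by
  have h2 : (√2 : ℝ) / 2 = 1 / √2 := by
    rw [div_eq_div_iff (by norm_num) (by positivity)]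
    simp
  unfold vstep rotM Matrix.mulVec dotProduct
  simp only [Matrix.of_apply, Real.cos_pi_div_four, Real.sin_pi_div_four]
  by_cases hki : k = i
  · subst hki
    have : ∀ l, (if k = k ∧ l = k then √2 / 2 else if k = k ∧ l = j then -(√2 / 2)
        else if k = j ∧ l = k then √2 / 2 else if k = j ∧ l = j then √2 / 2
        else if k = l then (1 : ℝ) else 0) * x l =
        (if l = k then √2 / 2 * x k else 0) + (if l = j then -(√2 / 2) * x j else 0) := by
      intro l
      by_cases h1 : l = k
      · subst h1; simp [h]
      · by_cases h3 : l = j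
        · subst h3; simp [h1]
        · simp [h1, h3, h, Ne.symm h1]
    rw [Finset.sum_congr rfl fun l _ => this l, Finset.sum_add_distrib]
    simp
    rw [h2]; ring
  · by_cases hkj : k = j
    · subst hkj
      have : ∀ l, (if k = i ∧ l = i then √2 / 2 else if k = i ∧ l = k then -(√2 / 2)
        else if k = k ∧ l = i then √2 / 2 else if k = k ∧ l = k then √2 / 2
        else if k = l then (1 : ℝ) else 0) * x l =
        (if l = i then √2 / 2 * x i else 0) + (if l = k then (√2 / 2) * x k else 0) := by
        intro l
        by_cases h1 : l = k
        · subst h1; simp [hki]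
        · by_cases h3 : l = i
          · subst h3; simp [h1, hki]
          · simp [h1, h3, Ne.symm h1]
      rw [Finset.sum_congr rfl fun l _ => this l, Finset.sum_add_distrib]
      simp [hki]
      rw [h2]; ring
    · simp [hki, hkj]

lemma vstep_norm {d : ℕ} {p : Fin d × Fin d} (h : p.1 ≠ p.2) (x : Fin d → ℝ) :
    ∑ k, vstep p x k ^ 2 = ∑ k, x k ^ 2 := by
  obtain ⟨i, j⟩ := p
  simp only at h
  have hs : ∀ F : Fin d → ℝ, ∑ k, F k = F i + F j + ∑ k ∈ (Finset.univ.erase i).erase j, F k := by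
    intro F
    rw [← Finset.add_sum_erase Finset.univ F (Finset.mem_univ i),
      ← Finset.add_sum_erase (Finset.univ.erase i) F (a := j) (by simp [h.symm]), add_assoc]
  rw [hs, hs fun k => x k ^ 2]
  have : ∑ k ∈ (Finset.univ.erase i).erase j, vstep (i, j) x k ^ 2 =
      ∑ k ∈ (Finset.univ.erase i).erase j, x k ^ 2 := by
    apply Finset.sum_congr rfl
    intro k hk
    simp at hk
    rw [vstep_apply h, if_neg hk.2, if_neg hk.1]
  rw [this, vstep_apply h, vstep_apply h, if_pos rfl, if_neg h.symm, if_pos rfl, div_pow, div_pow,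
    Real.sq_sqrt (by norm_num)]
  ring

/-- the averaging operator of one ORA step -/
def Kop (d : ℕ) : Module.End ℝ ((Fin d → ℝ) → ℝ) where
  toFun f := fun x => (∑ p ∈ (Finset.univ : Finset (Fin d)).offDiag, f (vstep p x)) /
    (d * ((d : ℝ) - 1))
  map_add' f g := by
    ext x
    simp [Finset.sum_add_distrib, add_div]
  map_smul' c f := by
    ext x
    simp [← Finset.mul_sum, mul_div_assoc]

lemma Kop_apply (d : ℕ) (f : (Fin d → ℝ) → ℝ) (x : Fin d → ℝ) :
    Kop d f x = (∑ p ∈ (Finset.univ : Finset (Fin d)).offDiag, f (vstep p x)) /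
    (d * ((d : ℝ) - 1)) := rfl

lemma dd_pos {d : ℕ} (hd : 2 ≤ d) : (0 : ℝ) < d * ((d : ℝ) - 1) := by
  have : (2 : ℝ) ≤ d := by exact_mod_cast hd
  nlinarith

lemma Kpow_mono {d : ℕ} (hd : 2 ≤ d) (t : ℕ) {f g : (Fin d → ℝ) → ℝ}
    (hfg : ∀ y : Fin d → ℝ, ∑ i, y i ^ 2 = 1 → f y ≤ g y) :
    ∀ x : Fin d → ℝ, ∑ i, x i ^ 2 = 1 → (Kop d ^ t) f x ≤ (Kop d ^ t) g x := by
  induction t with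
  | zero => simpa using hfg
  | succ t ih =>
    intro x hx
    rw [pow_succ', Module.End.mul_apply, Module.End.mul_apply, Kop_apply, Kop_apply]
    apply div_le_div_of_nonneg_right _ (dd_pos hd).le
    apply Finset.sum_le_sum
    intro p hp
    apply ih
    rw [vstep_norm (Finset.mem_offDiag.1 hp).2.2, hx]

lemma Kpow_const {d : ℕ} (hd : 2 ≤ d) (t : ℕ) (c : ℝ) : (Kop d ^ t) (fun _ => c) = fun _ => c := by
  induction t with
  | zero => simp
  | succ t ih =>
    rw [pow_succ', Module.End.mul_apply, ih]
    ext x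
    rw [Kop_apply, Finset.sum_const, nsmul_eq_mul, card_offDiag_real]
    exact mul_div_cancel_left₀ c (dd_pos hd).ne'

/-- even monomials -/
def mono {d : ℕ} (α : Fin d → ℕ) (x : Fin d → ℝ) : ℝ := ∏ k, x k ^ (2 * α k)

/-- symmetrised even monomials -/
def msum {d : ℕ} (α : Fin d → ℕ) (x : Fin d → ℝ) : ℝ :=
  ∑ σ : Equiv.Perm (Fin d), mono α (fun k => x (σ k))

lemma even_binom (x y : ℝ) (n : ℕ) :
    (x + y) ^ (2 * n) + (x - y) ^ (2 * n) =
      2 * ∑ c ∈ Finset.range (n + 1), ((2 * n).choose (2 * c) : ℝ) *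
        (x ^ (2 * c) * y ^ (2 * (n - c))) := by
  have hy : (x - y) = x + (-y) := by ring
  rw [hy, add_pow, add_pow, ← Finset.sum_add_distrib]
  have h1 : ∀ m ∈ Finset.range (2 * n + 1), x ^ m * y ^ (2 * n - m) * ((2 * n).choose m : ℝ) +
      x ^ m * (-y) ^ (2 * n - m) * ((2 * n).choose m : ℝ) =
      if Even m then 2 * (((2 * n).choose m : ℝ) * (x ^ m * y ^ (2 * n - m))) else 0 := by
    intro m hm
    simp at hm
    split_ifs with he
    · have : Even (2 * n - m) := by
        obtain ⟨c, rfl⟩ := he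
        exact ⟨n - c, by omega⟩
      rw [this.neg_pow]; ring
    · have : Odd (2 * n - m) := by
        rw [Nat.not_even_iff_odd] at he
        obtain ⟨c, rfl⟩ := he
        exact ⟨n - c - 1, by omega⟩
      rw [this.neg_pow]; ring
  rw [Finset.sum_congr rfl h1, ← Finset.sum_filter, Finset.mul_sum]
  symm
  apply Finset.sum_bij (fun c _ => 2 * c)
  · intro c hc
    simp at hc ⊢
    omega
  · intro a _ b _ hab
    omega
  · intro m hm
    simp at hm
    obtain ⟨c, hc⟩ := hm.2
    exact ⟨c, by simp; omega, by omega⟩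
  · intro c hc
    rw [show 2 * (n - c) = 2 * n - 2 * c by omega]

lemma rearr (A B : ℝ) (hA : 0 ≤ A) (hB : 0 ≤ B) (a b : ℕ) :
    A ^ a * B ^ b + B ^ a * A ^ b ≤ A ^ (a + b) + B ^ (a + b) := by
  have : 0 ≤ (A ^ a - B ^ a) * (A ^ b - B ^ b) := by
    rcases le_total A B with h | h
    · have h1 : A ^ a ≤ B ^ a := pow_le_pow_left₀ hA h a
      have h2 : A ^ b ≤ B ^ b := pow_le_pow_left₀ hA h b
      nlinarith
    · have h1 : B ^ a ≤ A ^ a := pow_le_pow_left₀ hB h a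
      have h2 : B ^ b ≤ A ^ b := pow_le_pow_left₀ hB h b
      nlinarith
  rw [pow_add, pow_add]
  nlinarith

lemma mono_pair {d : ℕ} (α : Fin d → ℕ) {i j : Fin d} (h : i ≠ j) (y : Fin d → ℝ) :
    mono α (vstep (i, j) y) + mono α (vstep (j, i) y) ≤
      2 * ∑ c ∈ Finset.range (α i + α j + 1), wt (α i + α j) c * mono (upd α i j c) y := by
  set rest := ∏ k ∈ (Finset.univ.erase i).erase j, y k ^ (2 * α k) with hrest
  have hr : 0 ≤ rest := Finset.prod_nonneg fun k _ => by rw [pow_mul]; positivity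
  have hs2 : (√2 : ℝ) ^ 2 = 2 := Real.sq_sqrt (by norm_num)
  set A := (y i + y j) ^ 2 / 2 with hA
  set B := (y i - y j) ^ 2 / 2 with hB
  have e1 : mono α (vstep (i, j) y) = B ^ α i * A ^ α j * rest := by
    unfold mono
    rw [prod_split _ h, vstep_apply h, vstep_apply h, if_pos rfl, if_neg h.symm, if_pos rfl]
    congr 1
    · rw [pow_mul, pow_mul, div_pow (y i - y j), div_pow (y i + y j), hs2]
    · apply Finset.prod_congr rfl
      intro k hk
      simp at hk
      rw [vstep_apply h, if_neg hk.2, if_neg hk.1]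
  have e2 : mono α (vstep (j, i) y) = A ^ α i * B ^ α j * rest := by
    unfold mono
    rw [prod_split _ h, vstep_apply h.symm, vstep_apply h.symm, if_pos rfl, if_neg h, if_pos rfl]
    congr 1
    · rw [pow_mul, pow_mul, div_pow (y j - y i), div_pow (y j + y i), hs2, hA, hB,
        add_comm (y j), ← neg_sub (y i), neg_sq]
    · apply Finset.prod_congr rfl
      intro k hk
      simp at hk
      rw [vstep_apply h.symm, if_neg hk.1, if_neg hk.2]
  have e3 : ∀ c, mono (upd α i j c) y = y i ^ (2 * c) * y j ^ (2 * (α i + α j - c)) * rest := by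
    intro c
    unfold mono
    rw [prod_split _ h, upd_i α h, upd_j,
      Finset.prod_congr rfl fun k hk => by rw [upd_rest α c hk]]
  have e4 : 2 * ∑ c ∈ Finset.range (α i + α j + 1), wt (α i + α j) c * mono (upd α i j c) y =
      (A ^ (α i + α j) + B ^ (α i + α j)) * rest := by
    have := even_binom (y i) (y j) (α i + α j)
    rw [hA, hB, div_pow, div_pow, ← add_div, ← pow_mul, ← pow_mul, this, mul_div_assoc, mul_assoc]
    congr 1
    rw [Finset.sum_div, Finset.sum_mul]
    apply Finset.sum_congr rfl
    intro c _
    rw [e3, wt]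
    ring
  rw [e1, e2, e4, ← add_mul]
  apply mul_le_mul_of_nonneg_right _ hr
  have := rearr A B (by positivity) (by positivity) (α i) (α j)
  linarith

lemma mono_sum {d : ℕ} (α : Fin d → ℕ) (y : Fin d → ℝ) :
    ∑ p ∈ (Finset.univ : Finset (Fin d)).offDiag, mono α (vstep p y) ≤
      ∑ p ∈ (Finset.univ : Finset (Fin d)).offDiag,
        ∑ c ∈ Finset.range (α p.1 + α p.2 + 1),
          wt (α p.1 + α p.2) c * mono (upd α p.1 p.2 c) y := by
  have h1 := sum_offDiag_swap fun p => mono α (vstep p y)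
  have h2 : ∑ p ∈ (Finset.univ : Finset (Fin d)).offDiag,
      (mono α (vstep p y) + mono α (vstep p.swap y)) ≤
      ∑ p ∈ (Finset.univ : Finset (Fin d)).offDiag,
        2 * ∑ c ∈ Finset.range (α p.1 + α p.2 + 1),
          wt (α p.1 + α p.2) c * mono (upd α p.1 p.2 c) y :=
    Finset.sum_le_sum fun p hp => mono_pair α (Finset.mem_offDiag.1 hp).2.2 y
  rw [Finset.sum_add_distrib, ← Finset.mul_sum] at h2
  linarith

lemma vstep_perm {d : ℕ} (σ : Equiv.Perm (Fin d)) {p : Fin d × Fin d} (h : p.1 ≠ p.2)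
    (x : Fin d → ℝ) :
    (fun k => vstep (σ p.1, σ p.2) x (σ k)) = vstep p (fun k => x (σ k)) := by
  obtain ⟨i, j⟩ := p
  simp only at h
  ext k
  have h' : σ i ≠ σ j := fun e => h (σ.injective e)
  rw [vstep_apply h, vstep_apply h']
  simp

lemma Kop_msum {d : ℕ} (hd : 2 ≤ d) (α : Fin d → ℕ) (x : Fin d → ℝ) :
    Kop d (msum α) x ≤ (∑ p ∈ (Finset.univ : Finset (Fin d)).offDiag,
        ∑ c ∈ Finset.range (α p.1 + α p.2 + 1),
          wt (α p.1 + α p.2) c * msum (upd α p.1 p.2 c) x) / (d * ((d : ℝ) - 1)) := by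
  rw [Kop_apply]
  apply div_le_div_of_nonneg_right _ (dd_pos hd).le
  unfold msum
  rw [Finset.sum_comm]
  have hR : ∑ p ∈ (Finset.univ : Finset (Fin d)).offDiag,
        ∑ c ∈ Finset.range (α p.1 + α p.2 + 1), wt (α p.1 + α p.2) c *
          ∑ σ : Equiv.Perm (Fin d), mono (upd α p.1 p.2 c) (fun k => x (σ k)) =
      ∑ σ : Equiv.Perm (Fin d), ∑ p ∈ (Finset.univ : Finset (Fin d)).offDiag,
        ∑ c ∈ Finset.range (α p.1 + α p.2 + 1), wt (α p.1 + α p.2) c *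
          mono (upd α p.1 p.2 c) (fun k => x (σ k)) := by
    rw [Finset.sum_comm]
    apply Finset.sum_congr rfl
    intro p _
    rw [Finset.sum_comm]
    apply Finset.sum_congr rfl
    intro c _
    rw [Finset.mul_sum]
  rw [hR]
  apply Finset.sum_le_sum
  intro σ _
  refine le_trans (le_of_eq ?_) (mono_sum α fun k => x (σ k))
  symm
  apply Finset.sum_equiv (Equiv.prodCongr σ σ)
  · intro p
    simp [Finset.mem_offDiag]
  · intro p hp
    rw [← vstep_perm σ (Finset.mem_offDiag.1 hp).2.2]
    rfl

/-! ### The flat states -/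

lemma perm_prod_le {d : ℕ} (z : Fin d → ℝ) (hz : ∀ i, 0 ≤ z i) (hsum : ∑ i, z i = 1) (q : ℕ)
    (hq : q < d) (S : Finset (Fin d)) (hS : S.card ≤ q) :
    ∑ σ : Equiv.Perm (Fin d), ∏ i ∈ S, z (σ i) ≤
      (Nat.factorial d : ℝ) * (1 / ((d : ℝ) - q)) ^ S.card := by
  have hdq : (0 : ℝ) < (d : ℝ) - q := by
    have : (q : ℝ) < d := by exact_mod_cast hq
    linarith
  induction S using Finset.induction_on with
  | empty => simp [Fintype.card_perm]
  | insert i S hi ih =>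
    rw [Finset.card_insert_of_notMem hi] at hS ⊢
    have ih' := ih (by omega)
    have hswap : ∀ k ∈ Sᶜ, ∑ σ : Equiv.Perm (Fin d), ∏ l ∈ insert i S, z (σ l) =
        ∑ σ : Equiv.Perm (Fin d), z (σ k) * ∏ l ∈ S, z (σ l) := by
      intro k hk
      rw [Finset.mem_compl] at hk
      apply Fintype.sum_equiv (Equiv.mulRight (Equiv.swap i k))
      intro σ
      rw [Finset.prod_insert hi]
      simp only [Equiv.coe_mulRight, Equiv.Perm.mul_apply, Equiv.swap_apply_right]
      congr 1
      apply Finset.prod_congr rfl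
      intro l hl
      rw [Equiv.swap_apply_of_ne_of_ne]
      · rintro rfl; exact hi hl
      · rintro rfl; exact hk hl
    set F := ∑ σ : Equiv.Perm (Fin d), ∏ l ∈ insert i S, z (σ l) with hF
    have h1 : (Sᶜ.card : ℝ) * F = ∑ σ : Equiv.Perm (Fin d), (∑ k ∈ Sᶜ, z (σ k)) * ∏ l ∈ S, z (σ l) := by
      rw [← nsmul_eq_mul, ← Finset.sum_const, Finset.sum_congr rfl hswap, Finset.sum_comm]
      simp_rw [Finset.sum_mul]
    have h2 : ∑ σ : Equiv.Perm (Fin d), (∑ k ∈ Sᶜ, z (σ k)) * ∏ l ∈ S, z (σ l) ≤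
        ∑ σ : Equiv.Perm (Fin d), ∏ l ∈ S, z (σ l) := by
      apply Finset.sum_le_sum
      intro σ _
      have hp : 0 ≤ ∏ l ∈ S, z (σ l) := Finset.prod_nonneg fun l _ => hz _
      have : ∑ k ∈ Sᶜ, z (σ k) ≤ 1 := by
        rw [← hsum, ← Equiv.sum_comp σ z]
        exact Finset.sum_le_sum_of_subset_of_nonneg (Finset.subset_univ _) fun k _ _ => hz _
      nlinarith
    have hF0 : 0 ≤ F := Finset.sum_nonneg fun σ _ => Finset.prod_nonneg fun l _ => hz _
    have h3 : (d : ℝ) - q ≤ (Sᶜ.card : ℝ) := by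
      have hc : Sᶜ.card + S.card = d := by
        simp
      have : d ≤ Sᶜ.card + q := by omega
      have : (d : ℝ) ≤ Sᶜ.card + q := by exact_mod_cast this
      linarith
    rw [pow_succ, ← mul_assoc, mul_one_div, le_div_iff₀ hdq]
    calc F * ((d : ℝ) - q) ≤ (Sᶜ.card : ℝ) * F := by nlinarith
      _ ≤ _ := by rw [h1]; exact h2.trans ih'

lemma msum_flat {d : ℕ} (α : Fin d → ℕ) (hα : ∀ i, α i ≤ 1) (hd : ∑ i, α i < d)
    (x : Fin d → ℝ) (hx : ∑ i, x i ^ 2 = 1) :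
    msum α x ≤ (Nat.factorial d : ℝ) * (1 / ((d : ℝ) - (∑ i, α i : ℕ))) ^ (∑ i, α i) := by
  set S := Finset.univ.filter fun i => α i = 1 with hS
  have hcard : S.card = ∑ i, α i := by
    rw [hS, Finset.card_filter]
    apply Finset.sum_congr rfl
    intro i _
    have := hα i
    split_ifs <;> omega
  have := perm_prod_le (fun i => x i ^ 2) (fun i => sq_nonneg _) hx (∑ i, α i) hd S hcard.le
  rw [hcard] at this
  refine le_trans (le_of_eq ?_) this
  unfold msum mono
  apply Finset.sum_congr rfl
  intro σ _
  rw [hS, Finset.prod_filter]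
  apply Finset.prod_congr rfl
  intro i _
  have := hα i
  split_ifs with h
  · rw [h]
  · have : α i = 0 := by omega
    simp [this]

/-! ### Moment bounds -/

lemma moment_bound {d q : ℕ} (hd : 2 ≤ d) (hqd : q < d)
    (hc : 27 / 16 * 2 ^ q + (d : ℝ) / 25 ≤ ((d : ℝ) - q) / 4)
    (x : Fin d → ℝ) (hx : ∑ i, x i ^ 2 = 1) (b : ℝ) (hb : 0 ≤ b) (hxb : ∀ i, x i ^ 2 ≤ b / d)
    (t : ℕ) : ∀ α : Fin d → ℕ, ∑ i, α i = q →
      (Kop d ^ t) (msum α) x ≤ (Nat.factorial d : ℝ) * (Gw (1 / ((d : ℝ) - q)) α *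
        (1 + b ^ q * (1 - 2 / (25 * (d : ℝ))) ^ t)) := by
  have hd2 : (2 : ℝ) ≤ d := by exact_mod_cast hd
  have hdq : (0 : ℝ) < (d : ℝ) - q := by
    have : (q : ℝ) < d := by exact_mod_cast hqd
    linarith
  set κ := 1 / ((d : ℝ) - q) with hκd
  have hκ : 0 < κ := by positivity
  set θ := 1 - 2 / (25 * (d : ℝ)) with hθ
  have hθ0 : 0 ≤ θ := by
    rw [hθ, sub_nonneg, div_le_one (by positivity)]
    linarith
  have hθ1 : θ ≤ 1 := by
    rw [hθ]
    have : 0 < 2 / (25 * (d : ℝ)) := by positivity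
    linarith
  have hfac : (0 : ℝ) < (Nat.factorial d : ℝ) := by exact_mod_cast Nat.factorial_pos d
  induction t with
  | zero =>
    intro α hα
    have hG := pow_le_Gw hκ α
    rw [hα] at hG
    have hG0 := Gw_pos hκ α
    have h1 : ∀ σ : Equiv.Perm (Fin d), mono α (fun k => x (σ k)) ≤ (b / d) ^ q := by
      intro σ
      unfold mono
      rw [← hα, ← Finset.prod_pow_eq_pow_sum]
      apply Finset.prod_le_prod
      · intro k _
        rw [pow_mul]; positivity
      · intro k _
        rw [pow_mul]
        exact pow_le_pow_left₀ (sq_nonneg _) (hxb _) _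
    have h2 : msum α x ≤ (Nat.factorial d : ℝ) * (b / d) ^ q := by
      unfold msum
      refine (Finset.sum_le_card_nsmul _ _ _ fun σ _ => h1 σ).trans (le_of_eq ?_)
      rw [nsmul_eq_mul, Finset.card_univ, Fintype.card_perm, Fintype.card_fin]
    have h3 : (b / d) ^ q ≤ b ^ q * Gw κ α := by
      have : 1 / (d : ℝ) ≤ κ := by
        apply one_div_le_one_div_of_le hdq
        have : (0 : ℝ) ≤ q := Nat.cast_nonneg q
        linarith
      calc (b / d) ^ q = b ^ q * (1 / (d : ℝ)) ^ q := by rw [← mul_pow]; ring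
        _ ≤ b ^ q * κ ^ q := by gcongr
        _ ≤ _ := by gcongr
    simp only [pow_zero, Module.End.one_apply, mul_one]
    refine h2.trans ?_
    apply mul_le_mul_of_nonneg_left _ hfac.le
    nlinarith
  | succ t ih =>
    intro α hα
    have hG0 := Gw_pos hκ α
    have hB : 0 ≤ b ^ q * θ ^ (t + 1) := by positivity
    by_cases hflat : ∀ i, α i ≤ 1
    · have h1 := Kpow_mono hd (t + 1) (f := msum α)
        (g := fun _ => (Nat.factorial d : ℝ) * κ ^ q) (by
          intro y hy
          have := msum_flat α hflat (by rw [hα]; exact hqd) y hy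
          rw [hα] at this
          exact this) x hx
      rw [Kpow_const hd] at h1
      refine h1.trans ?_
      apply mul_le_mul_of_nonneg_left _ hfac.le
      have hG := pow_le_Gw hκ α
      rw [hα] at hG
      nlinarith
    · push Not at hflat
      obtain ⟨i₀, hi₀⟩ := hflat
      have hcon := Gw_contract hκ α i₀ hi₀ (by rw [hα]; exact hc)
      have hdd := dd_pos hd
      rw [pow_succ, Module.End.mul_apply]
      have h1 := Kpow_mono hd t (f := Kop d (msum α))
        (g := (1 / (d * ((d : ℝ) - 1))) • ∑ p ∈ (Finset.univ : Finset (Fin d)).offDiag,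
          ∑ c ∈ Finset.range (α p.1 + α p.2 + 1),
            wt (α p.1 + α p.2) c • msum (upd α p.1 p.2 c)) (by
          intro y _
          refine (Kop_msum hd α y).trans (le_of_eq ?_)
          simp only [Pi.smul_apply, Finset.sum_apply, smul_eq_mul]
          ring) x hx
      refine h1.trans ?_
      simp only [map_smul, map_sum, Pi.smul_apply, Finset.sum_apply, smul_eq_mul]
      set E := (1 + b ^ q * θ ^ t) with hE
      have hE0 : 0 ≤ E := by positivity
      have h2 : ∑ p ∈ (Finset.univ : Finset (Fin d)).offDiag,
          ∑ c ∈ Finset.range (α p.1 + α p.2 + 1),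
            wt (α p.1 + α p.2) c * (Kop d ^ t) (msum (upd α p.1 p.2 c)) x ≤
          ∑ p ∈ (Finset.univ : Finset (Fin d)).offDiag,
          ∑ c ∈ Finset.range (α p.1 + α p.2 + 1),
            wt (α p.1 + α p.2) c * ((Nat.factorial d : ℝ) * (Gw κ (upd α p.1 p.2 c) * E)) := by
        apply Finset.sum_le_sum
        intro p hp
        apply Finset.sum_le_sum
        intro c hc'
        apply mul_le_mul_of_nonneg_left _ (wt_nonneg _ _)
        apply ih
        rw [upd_sum α (Finset.mem_offDiag.1 hp).2.2 c
          (by simpa [Nat.lt_succ_iff] using hc'), hα]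
      have h3 : ∑ p ∈ (Finset.univ : Finset (Fin d)).offDiag,
          ∑ c ∈ Finset.range (α p.1 + α p.2 + 1),
            wt (α p.1 + α p.2) c * ((Nat.factorial d : ℝ) * (Gw κ (upd α p.1 p.2 c) * E)) =
          (∑ p ∈ (Finset.univ : Finset (Fin d)).offDiag,
          ∑ c ∈ Finset.range (α p.1 + α p.2 + 1),
            wt (α p.1 + α p.2) c * Gw κ (upd α p.1 p.2 c)) * ((Nat.factorial d : ℝ) * E) := by
        rw [Finset.sum_mul]
        apply Finset.sum_congr rfl
        intro p _
        rw [Finset.sum_mul]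
        apply Finset.sum_congr rfl
        intro c _
        ring
      rw [h3] at h2
      have h4 : 1 / (d * ((d : ℝ) - 1)) * ((d * ((d : ℝ) - 1) - 2 * d / 25) * Gw κ α) ≤
          θ * Gw κ α := by
        rw [← mul_assoc]
        apply mul_le_mul_of_nonneg_right _ hG0.le
        rw [one_div_mul_eq_div, div_le_iff₀ hdd, hθ]
        have : (1 - 2 / (25 * (d : ℝ))) * (d * (d - 1)) = d * (d - 1) - 2 * (d - 1) / 25 := by
          field_simp
        rw [this]
        linarith
      calc _ ≤ 1 / (d * ((d : ℝ) - 1)) * (((d * ((d : ℝ) - 1) - 2 * d / 25) * Gw κ α) *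
            ((Nat.factorial d : ℝ) * E)) := by
            apply mul_le_mul_of_nonneg_left _ (by positivity)
            exact h2.trans (mul_le_mul_of_nonneg_right hcon (by positivity))
        _ = (1 / (d * ((d : ℝ) - 1)) * ((d * ((d : ℝ) - 1) - 2 * d / 25) * Gw κ α)) *
            ((Nat.factorial d : ℝ) * E) := by ring
        _ ≤ (θ * Gw κ α) * ((Nat.factorial d : ℝ) * E) :=
            mul_le_mul_of_nonneg_right h4 (by positivity)
        _ = (Nat.factorial d : ℝ) * (Gw κ α * (θ + b ^ q * θ ^ (t + 1))) := by
            rw [hE, pow_succ]; ring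
        _ ≤ _ := by gcongr

/-- indicator that some squared coordinate is at least `c / d` -/
def bad (d : ℕ) (c : ℝ) (y : Fin d → ℝ) : ℝ :=
  open Classical in if ∃ i, c / d ≤ y i ^ 2 then 1 else 0

lemma sumpow_eq {d : ℕ} (q : ℕ) :
    (fun y : Fin d → ℝ => ∑ i, y i ^ (2 * q)) =
      (1 / (Nat.factorial d : ℝ)) • ∑ i : Fin d, msum (Pi.single i q) := by
  ext y
  simp only [Pi.smul_apply, Finset.sum_apply, smul_eq_mul]
  unfold msum
  rw [Finset.sum_comm]
  have : ∀ σ : Equiv.Perm (Fin d), ∑ i : Fin d, mono (Pi.single i q) (fun k => y (σ k)) =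
      ∑ i, y i ^ (2 * q) := by
    intro σ
    rw [← Equiv.sum_comp σ fun i => y i ^ (2 * q)]
    apply Finset.sum_congr rfl
    intro i _
    unfold mono
    rw [Finset.prod_eq_single i]
    · simp
    · intro k _ hk
      simp [Pi.single_eq_of_ne hk]
    · simp
  rw [Finset.sum_congr rfl fun σ _ => this σ, Finset.sum_const, nsmul_eq_mul, Finset.card_univ,
    Fintype.card_perm, Fintype.card_fin]
  have hfac : (Nat.factorial d : ℝ) ≠ 0 := by exact_mod_cast (Nat.factorial_pos d).ne'
  field_simp

lemma Gw_single (κ : ℝ) {d : ℕ} (i : Fin d) (q : ℕ) : Gw κ (Pi.single i q) = gw κ q := by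
  unfold Gw
  rw [Finset.prod_eq_single i]
  · simp
  · intro k _ hk
    simp [Pi.single_eq_of_ne hk, gw]
  · simp

lemma stage {d q : ℕ} (hd : 2 ≤ d) (hq : 2 ≤ q) (hqd : 100 * q ≤ d)
    (hc : 27 / 16 * 2 ^ q + (d : ℝ) / 25 ≤ ((d : ℝ) - q) / 4)
    (x : Fin d → ℝ) (hx : ∑ i, x i ^ 2 = 1) (l : ℝ) (hxb : ∀ i, x i ^ 2 ≤ Real.exp l / d)
    (t : ℕ) (ht : 25 / 2 * d * q * l ≤ t) (c : ℝ) (hc0 : 0 < c) :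
    (Kop d ^ t) (bad d c) x ≤ d * (200 / 99 * q / c) ^ q := by
  have hd2 : (2 : ℝ) ≤ d := by exact_mod_cast hd
  have hq2 : (2 : ℝ) ≤ q := by exact_mod_cast hq
  have hqd' : 100 * (q : ℝ) ≤ d := by exact_mod_cast hqd
  have hdq : (0 : ℝ) < (d : ℝ) - q := by linarith
  set κ := 1 / ((d : ℝ) - q) with hκd
  have hκ : 0 < κ := by positivity
  have hmb := moment_bound hd (by omega : q < d) hc x hx (Real.exp l) (Real.exp_pos l).le hxb t
  have hθ : Real.exp l ^ q * (1 - 2 / (25 * (d : ℝ))) ^ t ≤ 1 := by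
    have h1 : (1 - 2 / (25 * (d : ℝ))) ≤ Real.exp (-(2 / (25 * (d : ℝ)))) := by
      have := Real.add_one_le_exp (-(2 / (25 * (d : ℝ))))
      linarith
    have h0 : 0 ≤ (1 - 2 / (25 * (d : ℝ))) := by
      rw [sub_nonneg, div_le_one (by positivity)]
      linarith
    calc _ ≤ Real.exp l ^ q * Real.exp (-(2 / (25 * (d : ℝ)))) ^ t := by gcongr
      _ = Real.exp (q * l + t * (-(2 / (25 * (d : ℝ))))) := by
          rw [← Real.exp_nat_mul, ← Real.exp_nat_mul, ← Real.exp_add]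
      _ ≤ 1 := by
          rw [Real.exp_le_one_iff]
          have : q * l = (25 / 2 * d * q * l) * (2 / (25 * (d : ℝ))) := by field_simp
          have h3 := mul_le_mul_of_nonneg_right ht (show 0 ≤ 2 / (25 * (d : ℝ)) by positivity)
          linarith
  have hfac : (0 : ℝ) < (Nat.factorial d : ℝ) := by exact_mod_cast Nat.factorial_pos d
  have hS : (Kop d ^ t) (fun y : Fin d → ℝ => ∑ i, y i ^ (2 * q)) x ≤ d * (2 * gw κ q) := by
    rw [sumpow_eq]
    simp only [map_smul, map_sum, Pi.smul_apply, Finset.sum_apply, smul_eq_mul]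
    rw [one_div_mul_eq_div, div_le_iff₀ hfac]
    refine (Finset.sum_le_card_nsmul _ _ ((Nat.factorial d : ℝ) * (2 * gw κ q)) ?_).trans
      (le_of_eq ?_)
    · intro i _
      have h1 := hmb (Pi.single i q) (by simp)
      rw [Gw_single] at h1
      refine h1.trans ?_
      have hg := gw_pos hκ q
      apply mul_le_mul_of_nonneg_left _ hfac.le
      rw [← hκd]
      nlinarith
    · rw [nsmul_eq_mul, Finset.card_univ, Fintype.card_fin]; ring
  have hbad : ∀ y : Fin d → ℝ, ∑ i, y i ^ 2 = 1 →
      bad d c y ≤ (((d : ℝ) / c) ^ q • fun y : Fin d → ℝ => ∑ i, y i ^ (2 * q)) y := by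
    intro y _
    simp only [Pi.smul_apply, smul_eq_mul]
    have hnn : ∀ i, 0 ≤ y i ^ (2 * q) := fun i => by rw [pow_mul]; positivity
    unfold bad
    split_ifs with h
    · obtain ⟨i, hi⟩ := h
      have h1 : y i ^ (2 * q) ≤ ∑ i, y i ^ (2 * q) :=
        Finset.single_le_sum (fun i _ => hnn i) (Finset.mem_univ i)
      calc (1 : ℝ) = ((d : ℝ) / c) ^ q * (c / d) ^ q := by
            rw [← mul_pow]; field_simp; simp
        _ ≤ ((d : ℝ) / c) ^ q * (y i ^ 2) ^ q := by gcongr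
        _ ≤ _ := by rw [← pow_mul]; gcongr
    · exact mul_nonneg (by positivity) (Finset.sum_nonneg fun i _ => hnn i)
  have h1 := Kpow_mono hd t hbad x hx
  simp only [map_smul, Pi.smul_apply, smul_eq_mul] at h1
  refine h1.trans ?_
  have hgw : 2 * gw κ q ≤ (2 * q * κ) ^ q := by
    have hq0 : q ≠ 0 := by omega
    have hD := dfac_le_pow q
    simp only [gw, hq0, if_false]
    have : (2 : ℝ) ^ q = 2 * 2 ^ (q - 1) := by rw [← pow_succ']; congr 1; omega
    rw [mul_pow, mul_pow, this]
    have := mul_le_mul_of_nonneg_right hD (show 0 ≤ 2 * 2 ^ (q - 1) * κ ^ q by positivity)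
    linarith
  calc _ ≤ ((d : ℝ) / c) ^ q * (d * (2 * q * κ) ^ q) := by
        apply mul_le_mul_of_nonneg_left _ (by positivity)
        exact hS.trans (by gcongr)
    _ = d * (2 * q * (κ * d) / c) ^ q := by
        rw [mul_left_comm, ← mul_pow]; congr 2; ring
    _ ≤ _ := by
        have : κ * d ≤ 100 / 99 := by
          rw [hκd, one_div_mul_eq_div, div_le_iff₀ hdq]
          linarith
        have h5 : 2 * (q : ℝ) * (κ * d) / c ≤ 200 / 99 * q / c := by
          apply div_le_div_of_nonneg_right _ hc0.le
          nlinarith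
        gcongr

/-! ### Link with the measure -/

/-- point masses of the pair distribution -/
def cw (d : ℕ) (p : Fin d × Fin d) : ℝ := if p.1 ≠ p.2 then 1 / (d * ((d : ℝ) - 1)) else 0

lemma cw_nonneg {d : ℕ} (hd : 2 ≤ d) (p : Fin d × Fin d) : 0 ≤ cw d p := by
  have := dd_pos hd
  unfold cw
  split_ifs <;> positivity

lemma pairUniform_singleton {d : ℕ} (hd : 2 ≤ d) (p : Fin d × Fin d) :
    pairUniform d {p} = ENNReal.ofReal (cw d p) := by
  have hcast : ((d * (d - 1) : ℕ) : ℝ) = d * ((d : ℝ) - 1) := by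
    rw [Nat.cast_mul, Nat.cast_sub (by omega), Nat.cast_one]
  have hpos := dd_pos hd
  unfold pairUniform cw
  rw [Measure.smul_apply, Measure.restrict_apply (MeasurableSet.singleton p), smul_eq_mul]
  by_cases h : p.1 ≠ p.2
  · have : ({p} : Set (Fin d × Fin d)) ∩ {p | p.1 ≠ p.2} = {p} := by
      ext r; simp only [Set.mem_inter_iff, Set.mem_singleton_iff, Set.mem_ofPred_eq]
      constructor
      · exact fun h => h.1
      · rintro rfl; exact ⟨rfl, h⟩
    rw [this, Measure.count_singleton, mul_one, if_pos h, one_div, ENNReal.ofReal_inv_of_pos hpos,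
      ← hcast, ENNReal.ofReal_natCast]
  · have : ({p} : Set (Fin d × Fin d)) ∩ {p | p.1 ≠ p.2} = ∅ := by
      ext r; simp only [Set.mem_inter_iff, Set.mem_singleton_iff, Set.mem_ofPred_eq,
        Set.mem_empty_iff_false, iff_false, not_and]
      rintro rfl; exact h
    rw [this, if_neg h]
    simp

lemma pairUniform_finite {d : ℕ} (hd : 2 ≤ d) : IsFiniteMeasure (pairUniform d) := by
  constructor
  have : (pairUniform d) Set.univ = ∑ p : Fin d × Fin d, pairUniform d {p} := by
    rw [← Finset.coe_univ, ← sum_measure_singleton]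
  rw [this]
  simp_rw [pairUniform_singleton hd]
  exact ENNReal.sum_lt_top.2 fun p _ => ENNReal.ofReal_lt_top

lemma oraMatrix_cons {d t : ℕ} (p : Fin d × Fin d) (ω : Fin t → Fin d × Fin d) (x : Fin d → ℝ) :
    (oraMatrix (Fin.cons p ω : Fin (t + 1) → Fin d × Fin d)).mulVec x =
      (oraMatrix ω).mulVec (vstep p x) := by
  unfold oraMatrix vstep
  rw [List.ofFn_succ, List.reverse_cons, List.prod_append, Matrix.mulVec_mulVec]
  simp

lemma sum_link {d : ℕ} (t : ℕ) (f : (Fin d → ℝ) → ℝ) : ∀ x : Fin d → ℝ,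
    ∑ ω : Fin t → Fin d × Fin d, (∏ i, cw d (ω i)) * f ((oraMatrix ω).mulVec x) =
      (Kop d ^ t) f x := by
  induction t with
  | zero => intro x; simp [oraMatrix]
  | succ t ih =>
    intro x
    rw [pow_succ', Module.End.mul_apply, Kop_apply, Finset.sum_div]
    rw [← Equiv.sum_comp (Fin.consEquiv fun _ => Fin d × Fin d), Fintype.sum_prod_type]
    have h1 : ∀ p : Fin d × Fin d, ∑ ω : Fin t → Fin d × Fin d,
        (∏ i, cw d ((Fin.consEquiv fun _ => Fin d × Fin d) (p, ω) i)) *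
          f ((oraMatrix ((Fin.consEquiv fun _ => Fin d × Fin d) (p, ω))).mulVec x) =
        if p.1 ≠ p.2 then (Kop d ^ t) f (vstep p x) / (d * ((d : ℝ) - 1)) else 0 := by
      intro p
      have h2 : ∀ ω : Fin t → Fin d × Fin d,
          (∏ i, cw d ((Fin.consEquiv fun _ => Fin d × Fin d) (p, ω) i)) *
          f ((oraMatrix ((Fin.consEquiv fun _ => Fin d × Fin d) (p, ω))).mulVec x) =
          cw d p * ((∏ i, cw d (ω i)) * f ((oraMatrix ω).mulVec (vstep p x))) := by
        intro ω
        have e : (Fin.consEquiv fun _ => Fin d × Fin d) (p, ω) =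
          (Fin.cons p ω : Fin (t + 1) → Fin d × Fin d) := rfl
        rw [e, oraMatrix_cons, Fin.prod_univ_succ]
        simp [mul_assoc]
      rw [Finset.sum_congr rfl fun ω _ => h2 ω, ← Finset.mul_sum, ih]
      unfold cw
      split_ifs
      · ring
      · ring
    rw [Finset.sum_congr rfl fun p _ => h1 p, ← Finset.sum_filter]
    apply Finset.sum_congr _ fun _ _ => rfl
    ext p
    simp [Finset.mem_offDiag]

lemma measure_link {d : ℕ} (hd : 2 ≤ d) (t : ℕ) (x : Fin d → ℝ) (P : (Fin d → ℝ) → Prop)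
    [DecidablePred P] :
    (Measure.pi fun _ : Fin t => pairUniform d)
      {ω : Fin t → Fin d × Fin d | P ((oraMatrix ω).mulVec x)} =
      ENNReal.ofReal ((Kop d ^ t) (fun y => if P y then 1 else 0) x) := by
  have := pairUniform_finite hd
  rw [← sum_link, ENNReal.ofReal_sum_of_nonneg]
  · have hs : {ω : Fin t → Fin d × Fin d | P ((oraMatrix ω).mulVec x)} =
        ((Finset.univ.filter fun ω : Fin t → Fin d × Fin d => P ((oraMatrix ω).mulVec x)) :
          Finset (Fin t → Fin d × Fin d)) := by
      ext ω; simp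
    rw [hs, ← sum_measure_singleton, Finset.sum_filter]
    apply Finset.sum_congr rfl
    intro ω _
    split_ifs with h
    · rw [mul_one, Measure.pi_singleton, ENNReal.ofReal_prod_of_nonneg fun i _ => cw_nonneg hd _]
      exact Finset.prod_congr rfl fun i _ => pairUniform_singleton hd _
    · simp
  · intro ω _
    apply mul_nonneg (Finset.prod_nonneg fun i _ => cw_nonneg hd _)
    split_ifs <;> norm_num

lemma cond_pow (q : ℕ) (hq : 7 ≤ q) :
    100 * (q : ℝ) ≤ (2718 / 1000 : ℝ) ^ q ∧
      27 / 16 * 2 ^ q + (q : ℝ) / 4 ≤ 21 / 100 * (2718 / 1000 : ℝ) ^ q := by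
  induction q, hq using Nat.le_induction with
  | base => norm_num
  | succ n hn ih =>
    obtain ⟨h1, h2⟩ := ih
    have hn' : (7 : ℝ) ≤ n := by exact_mod_cast hn
    push_cast
    rw [pow_succ, pow_succ]
    constructor <;> nlinarith

lemma cond_lemma {d q : ℕ} (hd : 600 ≤ d) (hq : (q : ℝ) ≤ Real.log d) :
    100 * q ≤ d ∧ 27 / 16 * 2 ^ q + (d : ℝ) / 25 ≤ ((d : ℝ) - q) / 4 := by
  have hd' : (600 : ℝ) ≤ d := by exact_mod_cast hd
  rcases Nat.lt_or_ge q 7 with h | h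
  · refine ⟨by omega, ?_⟩
    interval_cases q <;> norm_num <;> linarith
  · obtain ⟨h1, h2⟩ := cond_pow q h
    have h3 : (2718 / 1000 : ℝ) ^ q ≤ d := by
      calc (2718 / 1000 : ℝ) ^ q ≤ (Real.exp 1) ^ q := by
            apply pow_le_pow_left₀ (by norm_num)
            have := Real.exp_one_gt_d9
            linarith
        _ = Real.exp q := by rw [← Real.exp_nat_mul, mul_one]
        _ ≤ Real.exp (Real.log d) := Real.exp_le_exp.2 hq
        _ = d := Real.exp_log (by linarith)
    constructor
    · have : (100 * (q : ℝ)) ≤ d := h1.trans h3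
      exact_mod_cast this
    · linarith

lemma log_ge_six {d : ℕ} (hd : 600 ≤ d) : 6 ≤ Real.log d := by
  have hd' : (600 : ℝ) ≤ d := by exact_mod_cast hd
  rw [Real.le_log_iff_exp_le (by linarith)]
  have h := Real.exp_one_lt_d9
  have : Real.exp 6 = Real.exp 1 ^ 6 := by rw [← Real.exp_nat_mul]; norm_num
  rw [this]
  calc Real.exp 1 ^ 6 ≤ (2.7182818286 : ℝ) ^ 6 :=
        pow_le_pow_left₀ (Real.exp_pos 1).le h.le 6
    _ ≤ 600 := by norm_num
    _ ≤ d := hd'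

lemma final_num {d q : ℕ} (hq : 6 ≤ q) (hd0 : 0 < (d : ℝ)) (hdq : Real.log d ≤ q + 1) :
    (d : ℝ) * (2 / 99) ^ q ≤ 1 / (2 * (d : ℝ) ^ 2) := by
  rw [le_div_iff₀ (by positivity)]
  have he3 : Real.exp 3 ≤ 201 / 10 := by
    have h := Real.exp_one_lt_d9
    have : Real.exp 3 = Real.exp 1 ^ 3 := by rw [← Real.exp_nat_mul]; norm_num
    rw [this]
    calc Real.exp 1 ^ 3 ≤ (2.7182818286 : ℝ) ^ 3 :=
          pow_le_pow_left₀ (Real.exp_pos 1).le h.le 3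
      _ ≤ _ := by norm_num
  have hd1 : (d : ℝ) ≤ Real.exp (q + 1) := by
    rw [← Real.log_le_iff_le_exp hd0]; exact hdq
  have hd3 : (d : ℝ) ^ 3 ≤ (201 / 10) ^ (q + 1) := by
    calc (d : ℝ) ^ 3 ≤ Real.exp (q + 1) ^ 3 := pow_le_pow_left₀ hd0.le hd1 3
      _ = Real.exp 3 ^ (q + 1) := by
          rw [← Real.exp_nat_mul, ← Real.exp_nat_mul]; congr 1; push_cast; ring
      _ ≤ _ := pow_le_pow_left₀ (Real.exp_pos _).le he3 _
  have h6 : ((201 / 10 : ℝ) * (2 / 99)) ^ q ≤ ((201 / 10 : ℝ) * (2 / 99)) ^ 6 :=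
    pow_le_pow_of_le_one (by norm_num) (by norm_num) hq
  calc (d : ℝ) * (2 / 99) ^ q * (2 * (d : ℝ) ^ 2) = 2 * (d ^ 3 * (2 / 99) ^ q) := by ring
    _ ≤ 2 * ((201 / 10) ^ (q + 1) * (2 / 99) ^ q) := by gcongr
    _ = 2 * (201 / 10) * ((201 / 10 : ℝ) * (2 / 99)) ^ q := by rw [mul_pow]; ring
    _ ≤ 2 * (201 / 10) * ((201 / 10 : ℝ) * (2 / 99)) ^ 6 := by gcongr
    _ ≤ 1 := by norm_num

lemma final_stage {d : ℕ} (hd : 600 ≤ d) (x : Fin d → ℝ) (hx : ∑ i, x i ^ 2 = 1) (l : ℝ)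
    (hl : 0 ≤ l) (hxb : ∀ i, x i ^ 2 ≤ Real.exp l / d) (t : ℕ)
    (ht : 25 / 2 * d * Real.log d * l ≤ t) :
    (Kop d ^ t) (bad d (100 * Real.log d)) x ≤ 1 / (2 * (d : ℝ) ^ 2) := by
  have hd' : (600 : ℝ) ≤ d := by exact_mod_cast hd
  have h6 := log_ge_six hd
  set q := ⌊Real.log d⌋₊ with hqdef
  have hq1 : (q : ℝ) ≤ Real.log d := Nat.floor_le (by linarith)
  have hq2 : Real.log d < q + 1 := Nat.lt_floor_add_one _
  have hq6 : 6 ≤ q := Nat.le_floor (by exact_mod_cast h6)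
  obtain ⟨c1, c2⟩ := cond_lemma hd hq1
  refine (stage (by omega) (by omega) c1 c2 x hx l hxb t ?_ _ (by linarith)).trans ?_
  · refine le_trans ?_ ht
    gcongr
  · refine le_trans ?_ (final_num hq6 (by linarith) hq2.le)
    have hb : 200 / 99 * (q : ℝ) / (100 * Real.log d) ≤ 2 / 99 := by
      rw [div_le_iff₀ (by linarith)]
      linarith
    exact mul_le_mul_of_nonneg_left (pow_le_pow_left₀ (by positivity) hb q) (by linarith)

lemma mid_stage {d : ℕ} (hd : 600 ≤ d) (hl : 1000 ≤ Real.log d) (y : Fin d → ℝ)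
    (hy : ∑ i, y i ^ 2 = 1) (lam : ℝ) (h16 : 16 ≤ lam) (h3 : lam ≤ 3 * Real.log d)
    (hyb : ∀ i, y i ^ 2 ≤ Real.exp lam / d) (T : ℕ) (hT : 138 * (d * Real.log d) ≤ T) :
    (Kop d ^ T) (bad d (Real.exp (lam / 2 + Real.log (3 * Real.log d)))) y ≤
      1 / (d : ℝ) ^ 3 := by
  have hd' : (600 : ℝ) ≤ d := by exact_mod_cast hd
  set ℓ := Real.log d with hℓ
  have hlam : 0 < lam := by linarith
  set q := ⌈8 * ℓ / lam⌉₊ with hq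
  have hq1 : 8 * ℓ / lam ≤ q := Nat.le_ceil _
  have hq2 : (q : ℝ) < 8 * ℓ / lam + 1 := Nat.ceil_lt_add_one (by positivity)
  have hq3 : 8 * ℓ ≤ q * lam := by rwa [div_le_iff₀ hlam] at hq1
  have hq4 : q * lam ≤ 8 * ℓ + lam := by
    have : (q : ℝ) * lam ≤ (8 * ℓ / lam + 1) * lam := by gcongr
    rwa [add_mul, div_mul_cancel₀ _ hlam.ne', one_mul] at this
  have hq5 : (q : ℝ) ≤ ℓ := by
    have : 8 * ℓ / lam ≤ ℓ / 2 := by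
      rw [div_le_iff₀ hlam]; nlinarith
    linarith
  have hq6 : 2 ≤ q := by
    by_contra hcon
    have : (q : ℝ) ≤ 1 := by exact_mod_cast (by omega : q ≤ 1)
    nlinarith
  obtain ⟨c1, c2⟩ := cond_lemma hd hq5
  refine (stage (by omega) hq6 c1 c2 y hy lam hyb T ?_ _ (Real.exp_pos _)).trans ?_
  · refine le_trans ?_ hT
    have : 0 ≤ (d : ℝ) * ℓ := by positivity
    have h1 : (d : ℝ) * (q * lam) ≤ d * (11 * ℓ) :=
      mul_le_mul_of_nonneg_left (by linarith) (by linarith)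
    nlinarith
  · have hbase : 200 / 99 * (q : ℝ) / Real.exp (lam / 2 + Real.log (3 * ℓ)) ≤
        Real.exp (-(lam / 2)) := by
      rw [div_le_iff₀ (Real.exp_pos _), ← Real.exp_add, neg_add_cancel_left,
        Real.exp_log (by linarith)]
      linarith
    have hpow : (200 / 99 * (q : ℝ) / Real.exp (lam / 2 + Real.log (3 * ℓ))) ^ q ≤
        Real.exp (-(4 * ℓ)) := by
      calc _ ≤ Real.exp (-(lam / 2)) ^ q := pow_le_pow_left₀ (by positivity) hbase q
        _ = Real.exp (q * -(lam / 2)) := by rw [← Real.exp_nat_mul]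
        _ ≤ _ := Real.exp_le_exp.2 (by linarith)
    have he : Real.exp (-(4 * ℓ)) = 1 / (d : ℝ) ^ 4 := by
      rw [Real.exp_neg, show 4 * ℓ = ((4 : ℕ) : ℝ) * ℓ by norm_num, Real.exp_nat_mul, hℓ,
        Real.exp_log (by linarith), one_div]
    calc _ ≤ (d : ℝ) * (1 / (d : ℝ) ^ 4) := by rw [← he]; gcongr
      _ = _ := by field_simp

lemma bad_le_one {d : ℕ} (c : ℝ) (y : Fin d → ℝ) : bad d c y ≤ 1 := by
  unfold bad; split_ifs <;> norm_num

lemma Kpow_bad_le_one {d : ℕ} (hd : 2 ≤ d) (c : ℝ) (t : ℕ) (y : Fin d → ℝ)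
    (hy : ∑ i, y i ^ 2 = 1) : (Kop d ^ t) (bad d c) y ≤ 1 := by
  have := Kpow_mono hd t (f := bad d c) (g := fun _ => 1) (fun y _ => bad_le_one c y) y hy
  rwa [Kpow_const hd] at this

/-- Composing two stages. -/
lemma compose {d : ℕ} (hd : 2 ≤ d) (s t : ℕ) (c c' p p' : ℝ) (hp' : 0 ≤ p')
    (x : Fin d → ℝ) (hx : ∑ i, x i ^ 2 = 1)
    (h1 : (Kop d ^ s) (bad d c) x ≤ p)
    (h2 : ∀ y : Fin d → ℝ, ∑ i, y i ^ 2 = 1 → (∀ i, y i ^ 2 ≤ c / d) →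
      (Kop d ^ t) (bad d c') y ≤ p') :
    (Kop d ^ (s + t)) (bad d c') x ≤ p + p' := by
  rw [pow_add, Module.End.mul_apply]
  have key : ∀ y : Fin d → ℝ, ∑ i, y i ^ 2 = 1 →
      (Kop d ^ t) (bad d c') y ≤ (bad d c + (fun _ => p' : (Fin d → ℝ) → ℝ)) y := by
    intro y hy
    rw [Pi.add_apply]
    by_cases h : ∃ i, c / d ≤ y i ^ 2
    · have : bad d c y = 1 := by unfold bad; rw [if_pos h]
      have := Kpow_bad_le_one hd c' t y hy
      linarith
    · have hb : bad d c y = 0 := by unfold bad; rw [if_neg h]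
      push Not at h
      have := h2 y hy fun i => (h i).le
      linarith
  have := Kpow_mono hd s key x hx
  rw [map_add, Kpow_const hd, Pi.add_apply] at this
  linarith

lemma sq_le_one {d : ℕ} (y : Fin d → ℝ) (hy : ∑ i, y i ^ 2 = 1) (i : Fin d) : y i ^ 2 ≤ 1 := by
  rw [← hy]
  exact Finset.single_le_sum (f := fun i => y i ^ 2) (fun j _ => sq_nonneg _) (Finset.mem_univ i)

lemma bad_zero {d : ℕ} (c : ℝ) (hc : 1 < c / d) (y : Fin d → ℝ) (hy : ∑ i, y i ^ 2 = 1) :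
    bad d c y = 0 := by
  unfold bad
  rw [if_neg]
  rintro ⟨i, hi⟩
  linarith [sq_le_one y hy i]

lemma Kpow_bad_zero {d : ℕ} (hd : 2 ≤ d) (c : ℝ) (hc : 1 < c / d) (t : ℕ) (x : Fin d → ℝ)
    (hx : ∑ i, x i ^ 2 = 1) : (Kop d ^ t) (bad d c) x ≤ 0 := by
  have := Kpow_mono hd t (f := bad d c) (g := fun _ => 0)
    (fun y hy => (bad_zero c hc y hy).le) x hx
  rwa [Kpow_const hd] at this

lemma iterate_stage {d : ℕ} (hd : 600 ≤ d) (hl : 1000 ≤ Real.log d) (T : ℕ)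
    (hT : 138 * (d * Real.log d) ≤ T) (x : Fin d → ℝ) (hx : ∑ i, x i ^ 2 = 1) (k : ℕ) :
    (Kop d ^ (k * T)) (bad d (Real.exp (Real.log d / 2 ^ k + 2 * Real.log (3 * Real.log d)))) x ≤
      k * (1 / (d : ℝ) ^ 3) := by
  have hd' : (600 : ℝ) ≤ d := by exact_mod_cast hd
  have hL8 : 8 ≤ Real.log (3 * Real.log d) := by
    rw [Real.le_log_iff_exp_le (by linarith)]
    have h := Real.exp_one_lt_d9
    have : Real.exp 8 = Real.exp 1 ^ 8 := by rw [← Real.exp_nat_mul]; norm_num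
    rw [this]
    calc Real.exp 1 ^ 8 ≤ (2.7182818286 : ℝ) ^ 8 :=
          pow_le_pow_left₀ (Real.exp_pos 1).le h.le 8
      _ ≤ 3000 := by norm_num
      _ ≤ _ := by linarith
  have hLl : Real.log (3 * Real.log d) ≤ Real.log d := by
    rw [Real.log_le_iff_le_exp (by linarith)]
    have := Real.quadratic_le_exp_of_nonneg (x := Real.log d) (by linarith)
    nlinarith
  induction k with
  | zero =>
    have := Kpow_bad_zero (d := d) (by omega)
      (Real.exp (Real.log d / 2 ^ 0 + 2 * Real.log (3 * Real.log d))) ?_ (0 * T) x hx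
    · simpa using this
    · rw [lt_div_iff₀ (by linarith), one_mul]
      calc (d : ℝ) = Real.exp (Real.log d) := (Real.exp_log (by linarith)).symm
        _ < _ := Real.exp_lt_exp.2 (by rw [pow_zero, div_one]; linarith)
  | succ k ih =>
    rw [Nat.succ_mul]
    have hk : Real.log d / 2 ^ k ≤ Real.log d := by
      apply div_le_self (by linarith)
      exact one_le_pow₀ (by norm_num)
    have hk0 : 0 ≤ Real.log d / 2 ^ k := by positivity
    have := compose (d := d) (by omega) (k * T) T _
      (Real.exp (Real.log d / 2 ^ (k + 1) + 2 * Real.log (3 * Real.log d))) _ (1 / (d : ℝ) ^ 3)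
      (by positivity) x hx ih ?_
    · push_cast
      linarith
    · intro y hy hyb
      have := mid_stage hd hl y hy _ (by linarith) (by linarith) hyb T hT
      have e : Real.log d / 2 ^ (k + 1) + 2 * Real.log (3 * Real.log d) =
          (Real.log d / 2 ^ k + 2 * Real.log (3 * Real.log d)) / 2 +
            Real.log (3 * Real.log d) := by
        rw [pow_succ]; field_simp; ring
      rw [e]
      exact this

lemma large_case {d : ℕ} (hd : 600 ≤ d) (hl : 1000 ≤ Real.log d) (t : ℕ)
    (ht : 20000 * d * Real.log d * Real.log (Real.log d) ≤ t)
    (x : Fin d → ℝ) (hx : ∑ i, x i ^ 2 = 1) :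
    (Kop d ^ t) (bad d (100 * Real.log d)) x ≤ 1 / (d : ℝ) ^ 2 := by
  have hd' : (600 : ℝ) ≤ d := by exact_mod_cast hd
  set ℓ := Real.log d with hℓ
  set L := Real.log ℓ with hL
  have hL6 : 6 ≤ L := by
    have := log_ge_six (d := 1000) (by norm_num)
    refine this.trans (Real.log_le_log (by norm_num) ?_)
    exact_mod_cast hl
  have hLl : L ≤ ℓ := by
    have := Real.log_le_sub_one_of_pos (x := ℓ) (by linarith)
    linarith
  set K := ⌈2 * L⌉₊ with hK
  have hK1 : 2 * L ≤ K := Nat.le_ceil _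
  have hK2 : (K : ℝ) ≤ 3 * L := by
    have : (K : ℝ) < 2 * L + 1 := Nat.ceil_lt_add_one (by linarith)
    linarith
  have h2K : ℓ ≤ 2 ^ K := by
    rw [← Real.log_le_log_iff (by linarith) (by positivity), Real.log_pow]
    have := Real.log_two_gt_d9
    nlinarith
  set T := ⌈138 * (d * ℓ)⌉₊ with hT
  have hdl : 600 * 1000 ≤ d * ℓ := by nlinarith
  have hT1 : 138 * (d * ℓ) ≤ T := Nat.le_ceil _
  have hT2 : (T : ℝ) ≤ 139 * (d * ℓ) := by
    have : (T : ℝ) < 138 * (d * ℓ) + 1 := Nat.ceil_lt_add_one (by linarith)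
    linarith
  have hKT : ((K * T : ℕ) : ℝ) ≤ 417 * (d * ℓ * L) := by
    push_cast
    calc (K : ℝ) * T ≤ (3 * L) * (139 * (d * ℓ)) := by gcongr
      _ = _ := by ring
  have hpos : 0 ≤ d * ℓ * L := by positivity
  have hKTt : K * T ≤ t := by
    have : ((K * T : ℕ) : ℝ) ≤ t := by nlinarith
    exact_mod_cast this
  obtain ⟨s, rfl⟩ := Nat.exists_eq_add_of_le hKTt
  have hs : 100 * (d * ℓ * L) ≤ s := by
    rw [Nat.cast_add] at ht
    nlinarith
  have hlog3 : Real.log (3 * ℓ) ≤ 2 * L := by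
    rw [Real.log_mul (by norm_num) (by linarith)]
    have := Real.log_le_sub_one_of_pos (x := 3) (by norm_num)
    linarith
  have hlog3' : 0 ≤ Real.log (3 * ℓ) := Real.log_nonneg (by linarith)
  have hk1 : ℓ / 2 ^ K ≤ 1 := by rw [div_le_one (by positivity)]; exact h2K
  have hk0 : 0 ≤ ℓ / 2 ^ K := by positivity
  have := compose (d := d) (by omega) (K * T) s _ (100 * ℓ) _ (1 / (2 * (d : ℝ) ^ 2))
    (by positivity) x hx (iterate_stage hd hl T hT1 x hx K) ?_
  · refine this.trans ?_
    have hKd : 2 * (K : ℝ) ≤ d := by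
      have h1 := Real.quadratic_le_exp_of_nonneg (x := ℓ) (by linarith)
      rw [hℓ, Real.exp_log (by linarith), ← hℓ] at h1
      nlinarith
    have : (K : ℝ) * (1 / (d : ℝ) ^ 3) ≤ 1 / (2 * (d : ℝ) ^ 2) := by
      rw [mul_one_div, div_le_div_iff₀ (by positivity) (by positivity)]
      have : 0 ≤ (d : ℝ) ^ 2 := by positivity
      nlinarith
    have e : 1 / (2 * (d : ℝ) ^ 2) + 1 / (2 * (d : ℝ) ^ 2) = 1 / (d : ℝ) ^ 2 := by
      field_simp; norm_num
    linarith
  · intro y hy hyb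
    refine final_stage hd y hy _ (by linarith) hyb s ?_
    refine le_trans ?_ hs
    calc 25 / 2 * d * ℓ * (ℓ / 2 ^ K + 2 * Real.log (3 * ℓ)) ≤
        25 / 2 * d * ℓ * (5 * L) := by gcongr; linarith
      _ = 125 / 2 * (d * ℓ * L) := by ring
      _ ≤ _ := by linarith

lemma medium_case {d : ℕ} (hd : 600 ≤ d) (hl : Real.log d ≤ 1000) (t : ℕ)
    (ht : 20000 * d * Real.log d * Real.log (Real.log d) ≤ t)
    (x : Fin d → ℝ) (hx : ∑ i, x i ^ 2 = 1) :
    (Kop d ^ t) (bad d (100 * Real.log d)) x ≤ 1 / (d : ℝ) ^ 2 := by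
  have hd' : (600 : ℝ) ≤ d := by exact_mod_cast hd
  have h6 := log_ge_six hd
  have hL1 : 1 ≤ Real.log (Real.log d) := by
    rw [Real.le_log_iff_exp_le (by linarith)]
    have := Real.exp_one_lt_d9
    linarith
  refine (final_stage hd x hx (Real.log d) (by linarith) ?_ t ?_).trans ?_
  · intro i
    rw [Real.exp_log (by linarith), div_self (by linarith)]
    exact sq_le_one x hx i
  · refine le_trans ?_ ht
    have h0 : 0 ≤ (d : ℝ) * Real.log d := by positivity
    have h1 : d * Real.log d * Real.log d ≤ d * Real.log d * 1000 := by gcongr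
    have h2 : d * Real.log d * 1 ≤ d * Real.log d * Real.log (Real.log d) := by gcongr
    nlinarith
  · apply one_div_le_one_div_of_le (by positivity)
    nlinarith [sq_nonneg (d : ℝ)]

lemma small_log {d : ℕ} (h2 : 2 ≤ d) (h : d ≤ 600) : (d : ℝ) < 100 * Real.log d := by
  have key : ∀ k : ℕ, 2 ^ k ≤ d → d ≤ 69 * k → (d : ℝ) < 100 * Real.log d := by
    intro k hk hdk
    have h1 : (2 : ℝ) ^ k ≤ d := by exact_mod_cast hk
    have h3 : k * Real.log 2 ≤ Real.log d := by
      rw [← Real.log_pow]; exact Real.log_le_log (by positivity) h1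
    have h4 : (d : ℝ) ≤ 69 * k := by exact_mod_cast hdk
    have h5 := Real.log_two_gt_d9
    have h6 : (2 : ℝ) ≤ d := by exact_mod_cast h2
    have h7 : (0 : ℝ) < k := by linarith
    nlinarith
  rcases Nat.lt_or_ge d 64 with h1 | h1
  · exact key 1 (by omega) (by omega)
  rcases Nat.lt_or_ge d 256 with h3 | h3
  · exact key 6 (by omega) (by omega)
  rcases Nat.lt_or_ge d 512 with h4 | h4
  · exact key 8 (by omega) (by omega)
  · exact key 9 (by omega) (by omega)

lemma main_bound {d : ℕ} (hd : 2 ≤ d) (t : ℕ)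
    (ht : 20000 * d * Real.log d * Real.log (Real.log d) ≤ t)
    (x : Fin d → ℝ) (hx : ∑ i, x i ^ 2 = 1) :
    (Kop d ^ t) (bad d (100 * Real.log d)) x ≤ 1 / (d : ℝ) ^ 2 := by
  rcases le_total d 600 with h | h
  · have hd' : (2 : ℝ) ≤ d := by exact_mod_cast hd
    refine (Kpow_bad_zero hd _ ?_ t x hx).trans (by positivity)
    rw [lt_div_iff₀ (by linarith), one_mul]
    exact small_log hd h
  · rcases le_total (Real.log d) 1000 with h1 | h1
    · exact medium_case h h1 t ht x hx
    · exact large_case h h1 t ht x hx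

lemma one_case (t : ℕ) (s : Set (Fin t → Fin 1 × Fin 1)) :
    (Measure.pi fun _ : Fin t => pairUniform 1) s ≤ 1 := by
  have h0 : pairUniform 1 = 0 := by
    have : {p : Fin 1 × Fin 1 | p.1 ≠ p.2} = ∅ := by
      ext p
      simp [Subsingleton.elim p.1 p.2]
    unfold pairUniform
    rw [this]
    simp
  rw [h0]
  refine (measure_mono (Set.subset_univ s)).trans ?_
  rw [Measure.pi_univ]
  simp only [Measure.coe_zero, Pi.zero_apply]
  exact Finset.prod_le_one' fun _ _ => zero_le_one

/-- **Proposition 4.4**: with probability at least `1 - d⁻²`, after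
`C d (log d)(log log d)` steps of orthogonal repeated averaging all coordinates of the image
of a fixed unit vector are of size `O(√(log d / d))`. -/
theorem ora_max_coord :
    ∃ C : ℝ, 0 < C ∧
      ∀ (d : ℕ) (x : Fin d → ℝ), (∑ i, x i ^ 2 = 1) →
      ∀ t : ℕ, C * d * Real.log d * Real.log (Real.log d) ≤ t →
      (Measure.pi fun _ : Fin t => pairUniform d)
          {ω : Fin t → Fin d × Fin d |
            ∃ i : Fin d, 10 * Real.sqrt (Real.log d / d) ≤ |(oraMatrix ω).mulVec x i|} ≤
        (((d : ℝ≥0∞)) ^ 2)⁻¹ := by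
  refine ⟨20000, by norm_num, ?_⟩
  intro d x hx t ht
  rcases Nat.lt_or_ge d 2 with h | h
  · interval_cases d
    · simp at hx
    · refine (one_case t _).trans ?_
      simp
  · have hd' : (2 : ℝ) ≤ d := by exact_mod_cast h
    classical
    have hlink := measure_link h t x
      (fun y : Fin d → ℝ => ∃ i : Fin d, 10 * Real.sqrt (Real.log d / d) ≤ |y i|)
    rw [hlink]
    have hp : (Kop d ^ t) (fun y : Fin d → ℝ =>
        if ∃ i : Fin d, 10 * Real.sqrt (Real.log d / d) ≤ |y i| then 1 else 0) x ≤
        1 / (d : ℝ) ^ 2 := by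
      refine le_trans (Kpow_mono h t ?_ x hx) (main_bound h t ht x hx)
      intro y _
      unfold bad
      split_ifs with h1 h2 h2
      · exact le_rfl
      · exfalso
        apply h2
        obtain ⟨i, hi⟩ := h1
        refine ⟨i, ?_⟩
        have hn : 0 ≤ Real.log d / d := div_nonneg (Real.log_nonneg (by linarith)) (by linarith)
        have h3 := pow_le_pow_left₀ (by positivity) hi 2
        rw [mul_pow, Real.sq_sqrt hn, sq_abs] at h3
        rw [mul_div_assoc]
        linarith
      · exact zero_le_one
      · exact le_rfl
    refine (ENNReal.ofReal_le_ofReal hp).trans ?_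
    rw [one_div, ENNReal.ofReal_inv_of_pos (by positivity), ENNReal.ofReal_pow (by positivity),
      ENNReal.ofReal_natCast]

end KacJL
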